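/- arXiv:math/0409349 — 2 statements merged into one kernel-verified Lean document; each statement's English description precedes it below -/
import Mathlib

section
/- If X and Y are compact absolute retracts contained in the plane ℝ², then every connected component of X ∩ Y is a compact absolute retract (in particular, X ∩ Y is nonempty or the statement holds vacuously: each component, if any, is an AR). -/
open Topology

/-- A (nonempty compact metrizable) topological space is an absolute retract if,
whenever it is embedded as a closed subspace of a metrizable space, its image is
a retract of that space. -/
def IsAbsoluteRetract (X : Type) [TopologicalSpace X] : Prop :=
  Nonempty X ∧
    ∀ (Z : Type) (_ : TopologicalSpace Z), TopologicalSpace.MetrizableSpace Z →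
      ∀ f : X → Z, Topology.IsClosedEmbedding f →
        ∃ r : Z → X, Continuous r ∧ ∀ x : X, r (f x) = x

/-!
A subset of the plane that is closed and an absolute retract is a retract of the plane, and, by
the Tietze extension theorem, nonempty retracts of the plane are absolute retracts. A compact set
`K ⊆ ℂ` that is a retract has no pockets: the union of `K` with a small ball centred on it cannot
separate a point `a` far from that ball from infinity, since composing `z - a` with the retraction
produces a continuous logarithm of `z - a` on that union. Having no pockets passes to the
components of an intersection: a component `K` of `X ∩ Y` together with a ball confines `a` to a
bounded domain `W`, and `W` contains points outside `X` or outside `Y`, which are then confined by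
that larger set and a ball.

Conversely, a continuum `K` without pockets has a connected complement, whose union with `∞` is
the image of the unit disc under a univalent map `φ` sending `0` to `∞`. A length–area estimate
gives short crosscuts of the disc near each boundary point; without pockets they cut off regions
of uniformly small image, so `φ (t * ξ)` converges as `t → 1`, uniformly in `‖ξ‖ = 1`. Pushing the
complement of `K` along these radii onto `K` is a retraction.
-/

namespace PlaneAR

open Set Filter Metric Bornology

/-! ### Continuous logarithms -/

section HasLogOn

open Complex

variable {X : Type*} [TopologicalSpace X] {A B : Set X} {f g : X → ℂ}

/-- `g` has a continuous logarithm on `A`. -/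
def HasLogOn (g : X → ℂ) (A : Set X) : Prop :=
  ∃ l : X → ℂ, ContinuousOn l A ∧ ∀ x ∈ A, exp (l x) = g x

theorem HasLogOn.mono (h : HasLogOn g B) (hAB : A ⊆ B) : HasLogOn g A := by
  obtain ⟨l, hl, hexp⟩ := h
  exact ⟨l, hl.mono hAB, fun x hx => hexp x (hAB hx)⟩

theorem HasLogOn.congr (h : HasLogOn f A) (hfg : EqOn f g A) : HasLogOn g A := by
  obtain ⟨l, hl, hexp⟩ := h
  exact ⟨l, hl, fun x hx => (hexp x hx).trans (hfg hx)⟩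

theorem HasLogOn.continuousOn (h : HasLogOn g A) : ContinuousOn g A := by
  obtain ⟨l, hl, hexp⟩ := h
  exact hl.cexp.congr fun x hx => (hexp x hx).symm

theorem HasLogOn.ne_zero (h : HasLogOn g A) {x : X} (hx : x ∈ A) : g x ≠ 0 := by
  obtain ⟨l, -, hexp⟩ := h
  exact hexp x hx ▸ exp_ne_zero _

theorem HasLogOn.comp {Y : Type*} [TopologicalSpace Y] {φ : Y → X} {B : Set Y}
    (h : HasLogOn g A) (hφ : ContinuousOn φ B) (hBA : MapsTo φ B A) : HasLogOn (g ∘ φ) B := by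
  obtain ⟨l, hl, hexp⟩ := h
  exact ⟨l ∘ φ, hl.comp hφ hBA, fun y hy => hexp _ (hBA hy)⟩

theorem hasLogOn_const {c : ℂ} (hc : c ≠ 0) (A : Set X) : HasLogOn (fun _ => c) A :=
  ⟨fun _ => log c, continuousOn_const, fun _ _ => exp_log hc⟩

theorem HasLogOn.of_dist_lt (hg : HasLogOn g A) (hf : ContinuousOn f A)
    (h : ∀ x ∈ A, dist (f x) (g x) < ‖g x‖) : HasLogOn f A := by
  have hg0 : ∀ x ∈ A, g x ≠ 0 := fun x hx => hg.ne_zero hx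
  have hslit : ∀ x ∈ A, f x / g x ∈ slitPlane := fun x hx => by
    have hratio : f x / g x = 1 + (f x - g x) / g x := by field_simp [hg0 x hx]; ring
    rw [hratio]
    refine mem_slitPlane_of_norm_lt_one ?_
    rw [norm_div, div_lt_one (norm_pos_iff.2 (hg0 x hx)), ← dist_eq_norm]
    exact h x hx
  have hratio_cont : ContinuousOn (fun x => f x / g x) A := hf.div hg.continuousOn hg0
  obtain ⟨l, hl, hexp⟩ := hg
  refine ⟨fun x => l x + log (f x / g x), hl.add (hratio_cont.clog hslit), fun x hx => ?_⟩
  rw [exp_add, hexp x hx, exp_log (slitPlane_ne_zero (hslit x hx)), mul_div_cancel₀ _ (hg0 x hx)]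

theorem hasLogOn_of_continuous [SimplyConnectedSpace X] [LocallyPathConnectedSpace X]
    (hg : Continuous g) (hg0 : ∀ x, g x ≠ 0) (A : Set X) : HasLogOn g A := by
  obtain ⟨x₀⟩ : Nonempty X := inferInstance
  obtain ⟨l, ⟨-, hl⟩, -⟩ := isCoveringMapOn_exp.existsUnique_continuousMap_lifts ⟨g, hg⟩
    (exp_log (hg0 x₀)) hg0
  exact ⟨l, l.continuous.continuousOn, fun x _ => congrFun hl x⟩

theorem sub_eq_sub_of_exp_eqOn (hA : IsPreconnected A) {l l' : X → ℂ} (hl : ContinuousOn l A)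
    (hl' : ContinuousOn l' A) (hexp : ∀ x ∈ A, exp (l x) = exp (l' x)) {x y : X} (hx : x ∈ A)
    (hy : y ∈ A) : l x - l' x = l y - l' y := by
  have hshift : exp (l x - l' x) = 1 := by
    rw [exp_sub, hexp x hx, div_self (exp_ne_zero _)]
  have heq : EqOn l (fun z => l' z + (l x - l' x)) A :=
    isCoveringMap_exp.eqOn_of_comp_eqOn hA hl (hl'.add continuousOn_const)
      (fun z hz => Subtype.ext (by simp [exp_add, hshift, hexp z hz])) hx (by simp)
  rw [heq hy]
  ring

theorem not_hasLogOn_sphere (a : ℂ) {R : ℝ} (hR : 0 < R) :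
    ¬ HasLogOn (fun z => z - a) (sphere a R) := by
  rintro ⟨l, hl, hexp⟩
  have hmem : ∀ t : ℝ, circleMap a R t ∈ sphere a R := circleMap_mem_sphere a hR.le
  have hcont : Continuous fun t : ℝ => l (circleMap a R t) :=
    hl.comp_continuous (continuous_circleMap a R) hmem
  have hlift : ∀ t ∈ (univ : Set ℝ), exp (l (circleMap a R t)) = exp (Real.log R + t * I) :=
    fun t _ => by
      rw [hexp _ (hmem t), exp_add, ← ofReal_exp, Real.exp_log hR]
      simp [circleMap]
  have hturn := sub_eq_sub_of_exp_eqOn isPreconnected_univ hcont.continuousOn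
    (by fun_prop) hlift (mem_univ 0) (mem_univ (2 * Real.pi))
  have hperiod : circleMap a R (2 * Real.pi) = circleMap a R 0 := by
    simpa using periodic_circleMap a R 0
  rw [hperiod] at hturn
  simp [Real.pi_ne_zero] at hturn

theorem continuousOn_mul_of_bounded {U V : Set X} (hV : IsOpen V) {C : ℝ}
    (hf : ContinuousOn f (U ∩ V)) (hC : ∀ x, ‖f x‖ ≤ C) (hg : Continuous g)
    (hgV : ∀ x ∉ V, g x = 0) : ContinuousOn (fun x => g x * f x) U := fun x hx => by
  by_cases hxV : x ∈ V
  · exact hg.continuousWithinAt.mul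
      ((hf x ⟨hx, hxV⟩).mono_of_mem_nhdsWithin
        (inter_mem self_mem_nhdsWithin (mem_nhdsWithin_of_mem_nhds (hV.mem_nhds hxV))))
  · have hlim : Tendsto g (𝓝[U] x) (𝓝 0) := hgV x hxV ▸ hg.continuousWithinAt
    simpa [ContinuousWithinAt, hgV x hxV] using
      hlim.zero_mul_isBoundedUnder_le (isBoundedUnder_of ⟨C, hC⟩)

-- A locally constant function on `U ∩ V` is, up to the factor `2πi`, the difference of functions
-- continuous on `U` and on `V`; their exponentials glue to a nonvanishing function on `X`, and a
-- logarithm of it shows that the locally constant function is constant.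
theorem isPreconnected_inter_of_union_eq_univ [SimplyConnectedSpace X]
    [LocallyPathConnectedSpace X] [NormalSpace X] {U V : Set X} (hU : IsOpen U) (hV : IsOpen V)
    (hUc : IsPreconnected U) (hVc : IsPreconnected V) (hUV : U ∪ V = univ) :
    IsPreconnected (U ∩ V) := by
  refine isPreconnected_of_forall_constant fun b hb x hx y hy => ?_
  have hcover : ∀ z, z ∈ U ∨ z ∈ V := fun z => (hUV ▸ mem_univ z : z ∈ U ∪ V)
  obtain ⟨χ, hχV, hχU, -⟩ := exists_continuous_zero_one_of_isClosed hV.isClosed_compl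
    hU.isClosed_compl (disjoint_compl_left_iff_subset.2
      fun z hz => (hcover z).resolve_left hz)
  set ι : Bool → ℂ := fun c => if c then 2 * Real.pi * I else 0 with hι
  have hιb : ContinuousOn (fun z => ι (b z)) (U ∩ V) :=
    (continuous_of_discreteTopology (f := ι)).comp_continuousOn hb
  have hbound : ∀ z, ‖ι (b z)‖ ≤ 2 * Real.pi := fun z => by
    cases h : b z <;> simp [hι, abs_of_pos Real.pi_pos, Real.pi_pos.le]
  have hα : ContinuousOn (fun z => (χ z : ℂ) * ι (b z)) U :=
    continuousOn_mul_of_bounded hV hιb hbound (by fun_prop) fun z hz => by simp [hχV hz]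
  have hβ : ContinuousOn (fun z => ((χ z : ℂ) - 1) * ι (b z)) V :=
    continuousOn_mul_of_bounded hU (inter_comm U V ▸ hιb) hbound (by fun_prop)
      fun z hz => by simp [hχU hz]
  have hexp : ∀ z, exp (χ z * ι (b z)) = exp ((χ z - 1) * ι (b z)) := fun z => by
    rw [exp_eq_exp_iff_exists_int]
    cases h : b z
    · exact ⟨0, by simp [hι]⟩
    · exact ⟨1, by simp [hι]; ring⟩
  have hcont : Continuous fun z => exp (χ z * ι (b z)) :=
    continuousOn_univ.1 <| hUV ▸ hα.cexp.union_of_isOpen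
      (hβ.cexp.congr fun z _ => hexp z) hU hV
  obtain ⟨l, hl, hlexp⟩ := hasLogOn_of_continuous hcont (fun z => exp_ne_zero _) univ
  have hlU := sub_eq_sub_of_exp_eqOn hUc (hl.mono (subset_univ U)) hα
    (fun z _ => hlexp z trivial) hx.1 hy.1
  have hlV := sub_eq_sub_of_exp_eqOn hVc (hl.mono (subset_univ V)) hβ
    (fun z _ => (hlexp z trivial).trans (hexp z)) hx.2 hy.2
  have hιxy : ι (b x) = ι (b y) := by linear_combination hlV - hlU
  cases hbx : b x <;> cases hby : b y <;> simp_all [Real.pi_ne_zero]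

end HasLogOn

/-! ### Complementary components -/

section Components

variable {X : Type*} [TopologicalSpace X] {F W : Set X} {x : X}

theorem isClosed_connectedComponentIn (hF : IsClosed F) (x : X) :
    IsClosed (connectedComponentIn F x) := by
  by_cases hx : x ∈ F
  · exact isClosed_of_closure_subset <|
      isPreconnected_connectedComponentIn.closure.subset_connectedComponentIn
        (subset_closure (mem_connectedComponentIn hx))
        (closure_minimal (connectedComponentIn_subset _ _) hF)
  · rw [connectedComponentIn_eq_empty hx]
    exact isClosed_empty

theorem frontier_connectedComponentIn_subset_compl [LocallyConnectedSpace X] (hF : IsOpen F)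
    (x : X) : frontier (connectedComponentIn F x) ⊆ Fᶜ := fun z hz hzF => by
  obtain ⟨w, hwz, hwx⟩ := _root_.mem_closure_iff.1 (frontier_subset_closure hz) _
    hF.connectedComponentIn (mem_connectedComponentIn hzF)
  have heq : connectedComponentIn F x = connectedComponentIn F z :=
    (connectedComponentIn_eq hwx).trans (connectedComponentIn_eq hwz).symm
  rw [heq, hF.connectedComponentIn.frontier_eq] at hz
  exact hz.2 (mem_connectedComponentIn hzF)

theorem subset_connectedComponentIn_of_closure_inter_nonempty (hW : IsPreconnected W)
    (hWF : W ⊆ F) (h : (closure W ∩ connectedComponentIn F x).Nonempty) :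
    W ⊆ connectedComponentIn F x := by
  obtain ⟨w, hw, hwx⟩ := h
  have hinsert : IsPreconnected (insert w W) :=
    hW.subset_closure (subset_insert _ _) (insert_subset hw subset_closure)
  rw [connectedComponentIn_eq hwx]
  exact (subset_insert _ _).trans (hinsert.subset_connectedComponentIn (mem_insert _ _)
    (insert_subset (connectedComponentIn_subset F x hwx) hWF))

end Components

section NormedSpace

variable {E : Type*} [NormedAddCommGroup E] [NormedSpace ℝ E] {K : Set E}

theorem isPreconnected_compl_closedBall (hE : 1 < Module.rank ℝ E) (x : E) {r : ℝ}
    (hr : 0 ≤ r) : IsPreconnected (closedBall x r)ᶜ := by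
  have himage : (fun p : ℝ × E => x + p.1 • p.2) '' (Ioi r ×ˢ sphere 0 1) =
      (closedBall x r)ᶜ := by
    ext y
    simp only [mem_image, mem_prod, mem_Ioi, mem_sphere_zero_iff_norm, Prod.exists, mem_compl_iff,
      mem_closedBall, not_le]
    constructor
    · rintro ⟨t, v, ⟨ht, hv⟩, rfl⟩
      simpa [norm_smul, hv, abs_of_pos (hr.trans_lt ht)] using ht
    · intro hy
      have hpos : 0 < dist y x := hr.trans_lt hy
      refine ⟨dist y x, (dist y x)⁻¹ • (y - x), ⟨hy, ?_⟩, ?_⟩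
      · rw [norm_smul, norm_inv, Real.norm_of_nonneg hpos.le, ← dist_eq_norm,
          inv_mul_cancel₀ hpos.ne']
      · rw [smul_inv_smul₀ hpos.ne', add_sub_cancel]
  rw [← himage]
  exact (isPreconnected_Ioi.prod (isPreconnected_sphere hE 0 1)).image _ (by fun_prop)

theorem not_isBounded_compl_closedBall [Nontrivial E] (x : E) (r : ℝ) :
    ¬ IsBounded (closedBall x r)ᶜ := fun h =>
  NormedSpace.unbounded_univ ℝ E (compl_union_self (closedBall x r) ▸ h.union isBounded_closedBall)

theorem nonempty_compl_of_isBounded [Nontrivial E] (hK : IsBounded K) : Kᶜ.Nonempty :=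
  nonempty_compl.2 fun h => NormedSpace.unbounded_univ ℝ E (h ▸ hK)

theorem compl_closedBall_subset_connectedComponentIn (hE : 1 < Module.rank ℝ E) {x a : E}
    {r : ℝ} (hr : 0 ≤ r) (hK : K ⊆ closedBall x r)
    (ha : ¬ IsBounded (connectedComponentIn Kᶜ a)) :
    (closedBall x r)ᶜ ⊆ connectedComponentIn Kᶜ a := by
  obtain ⟨b, hba, hb⟩ := not_subset.1 fun h => ha (isBounded_closedBall.subset h)
  rw [connectedComponentIn_eq hba]
  exact (isPreconnected_compl_closedBall hE x hr).subset_connectedComponentIn hb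
    (compl_subset_compl.2 hK)

theorem isPreconnected_compl_of_forall_not_isBounded (hE : 1 < Module.rank ℝ E)
    (hK : IsBounded K) (h : ∀ a ∉ K, ¬ IsBounded (connectedComponentIn Kᶜ a)) :
    IsPreconnected Kᶜ := by
  have : Nontrivial E := (rank_pos_iff_nontrivial (R := ℝ)).1 (one_pos.trans hE)
  obtain ⟨r, hr, hKr⟩ := hK.subset_closedBall_lt 0 0
  refine isPreconnected_of_forall_pair fun a ha b hb => ⟨connectedComponentIn Kᶜ a,
    connectedComponentIn_subset _ _, mem_connectedComponentIn ha, ?_,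
    isPreconnected_connectedComponentIn⟩
  obtain ⟨c, hc⟩ : (closedBall (0 : E) r)ᶜ.Nonempty :=
    nonempty_compl_of_isBounded isBounded_closedBall
  have hca := compl_closedBall_subset_connectedComponentIn hE hr.le hKr (h a ha) hc
  have hcb := compl_closedBall_subset_connectedComponentIn hE hr.le hKr (h b hb) hc
  rw [connectedComponentIn_eq hca, ← connectedComponentIn_eq hcb]
  exact mem_connectedComponentIn hb

end NormedSpace

theorem one_lt_rank_complex : 1 < Module.rank ℝ ℂ := by
  simp [Complex.rank_real_complex]

section Borsuk

variable {A W : Set ℂ} {a b : ℂ}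

theorem HasLogOn.sub_of_isPreconnected (hA : IsClosed A) (hW : IsPreconnected W)
    (hWA : W ⊆ Aᶜ) (ha : a ∈ W) (hb : b ∈ W) (h : HasLogOn (fun z => z - a) A) :
    HasLogOn (fun z => z - b) A := by
  have hnear : ∀ (b c : ℂ) (d : ℝ), ball b d ⊆ Aᶜ → dist c b < d / 2 →
      HasLogOn (fun z => z - b) A → HasLogOn (fun z => z - c) A := fun b c d hd hc hlog =>
    hlog.of_dist_lt (by fun_prop) fun z hz => by
      have hdz : d ≤ dist z b := not_lt.1 fun hzb => hd hzb hz
      rw [dist_sub_left, ← dist_eq_norm]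
      linarith [dist_nonneg.trans_lt hc]
  refine hW.induction₂' (fun b c => HasLogOn (fun z => z - b) A → HasLogOn (fun z => z - c) A)
    (fun x hx => ?_) (fun _ _ _ _ _ _ hxy hyz => hyz ∘ hxy) ha hb h
  obtain ⟨d, hd, hdA⟩ := Metric.isOpen_iff.1 hA.isOpen_compl x (hWA hx)
  filter_upwards [mem_nhdsWithin_of_mem_nhds (ball_mem_nhds x (by positivity : 0 < d / 4))]
    with y hy
  rw [mem_ball] at hy
  refine ⟨hnear x y d hdA (by linarith), hnear y x (d / 2) ?_ ?_⟩
  · exact (ball_subset_ball' (by linarith)).trans hdA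
  · rw [dist_comm]
    linarith

theorem hasLogOn_sub_of_isPreconnected_compl (hA : IsCompact A) (hAc : IsPreconnected Aᶜ)
    (ha : a ∉ A) : HasLogOn (fun z => z - a) A := by
  obtain ⟨r, hr, hAr⟩ := hA.isBounded.subset_closedBall_lt 0 0
  obtain ⟨b, hb⟩ : (closedBall (0 : ℂ) r)ᶜ.Nonempty :=
    nonempty_compl_of_isBounded isBounded_closedBall
  have hrb : r < ‖b‖ := by simpa using hb
  refine HasLogOn.sub_of_isPreconnected hA.isClosed hAc subset_rfl (fun h => hb (hAr h)) ha ?_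
  refine (hasLogOn_const (neg_ne_zero.2 (norm_pos_iff.1 (hr.trans hrb))) A).of_dist_lt
    (by fun_prop) fun z hz => ?_
  have hz : ‖z‖ ≤ r := by simpa using hAr hz
  simpa [dist_eq_norm] using hz.trans_lt hrb

-- Otherwise a logarithm of `z - a` on `A`, extended over the bounded component `W` of `a`, glues
-- with `z - a` off `W` to a nonvanishing function on `ℂ` that winds around `0` far away.
theorem HasLogOn.not_isBounded_connectedComponentIn (hA : IsClosed A) (ha : a ∉ A)
    (h : HasLogOn (fun z => z - a) A) : ¬ IsBounded (connectedComponentIn Aᶜ a) := by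
  classical
  intro hbdd
  set W := connectedComponentIn Aᶜ a
  have haW : a ∈ W := mem_connectedComponentIn ha
  obtain ⟨l, hl, hexp⟩ := h
  obtain ⟨L, hL⟩ := ContinuousMap.exists_restrict_eq hA
    ⟨A.domRestrict l, continuousOn_iff_continuous_domRestrict.1 hl⟩
  have hLA : ∀ z ∈ A, Complex.exp (L z) = z - a := fun z hz => by
    exact (congrArg Complex.exp (DFunLike.congr_fun hL ⟨z, hz⟩)).trans (hexp z hz)
  set F : ℂ → ℂ := W.piecewise (fun z => Complex.exp (L z)) (fun z => z - a)
  have hF : Continuous F := Continuous.piecewise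
    (fun z hz => hLA z <| not_not.1 <|
      frontier_connectedComponentIn_subset_compl hA.isOpen_compl a hz)
    (by fun_prop) (by fun_prop)
  have hF0 : ∀ z, F z ≠ 0 := fun z => by
    by_cases hz : z ∈ W
    · simp [F, hz, Complex.exp_ne_zero]
    · simpa [F, hz, sub_eq_zero] using fun h : z = a => hz (h ▸ haW)
  obtain ⟨R, hR, hWR⟩ := hbdd.subset_ball_lt 0 a
  refine not_hasLogOn_sphere a hR ((hasLogOn_of_continuous hF hF0 _).congr fun z hz => ?_)
  exact piecewise_eq_of_notMem _ _ _ fun hzW => (mem_sphere.1 hz).not_lt (hWR hzW)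

end Borsuk

/-! ### Retracts -/

section Retract

/-- `K` is a retract of the ambient space. -/
def IsRetract {α : Type*} [TopologicalSpace α] (K : Set α) : Prop :=
  ∃ r : α → α, Continuous r ∧ (∀ z, r z ∈ K) ∧ ∀ z ∈ K, r z = z

theorem IsRetract.image {α β : Type*} [TopologicalSpace α] [TopologicalSpace β] {K : Set α}
    (hK : IsRetract K) (e : α ≃ₜ β) : IsRetract (e '' K) := by
  obtain ⟨r, hr, hmaps, hfix⟩ := hK
  refine ⟨e ∘ r ∘ e.symm, by fun_prop, fun z => mem_image_of_mem e (hmaps _), ?_⟩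
  rintro _ ⟨z, hz, rfl⟩
  simp [hfix z hz]

theorem isRetract_of_forall_exists_dist_le {α ι : Type*} [MetricSpace α] [CompleteSpace α]
    {K : Set α} (hK : IsClosed K) {l : Filter ι} [l.NeBot] {F : ι → α → α}
    (hF : ∀ᶠ i in l, Continuous (F i)) (hfix : ∀ i, ∀ z ∈ K, F i z = z)
    (happrox : ∀ ε > 0, ∃ S ∈ l, ∀ z, ∃ e ∈ K, ∀ i ∈ S, dist (F i z) e ≤ ε) : IsRetract K := by
  have hcauchy : ∀ z, Cauchy (map (F · z) l) := fun z => by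
    refine Metric.cauchy_iff.2 ⟨inferInstance, fun ε hε => ?_⟩
    obtain ⟨S, hS, happ⟩ := happrox (ε / 3) (by positivity)
    obtain ⟨e, -, he⟩ := happ z
    refine ⟨_, image_mem_map hS, ?_⟩
    rintro _ ⟨i, hi, rfl⟩ _ ⟨j, hj, rfl⟩
    linarith [dist_triangle_right (F i z) (F j z) e, he i hi, he j hj]
  choose r hr using fun z => CompleteSpace.complete (hcauchy z)
  replace hr : ∀ z, Tendsto (F · z) l (𝓝 (r z)) := hr
  have hlim : ∀ ε > 0, ∃ S ∈ l, ∀ z, ∃ e ∈ K, dist (r z) e ≤ ε ∧ ∀ i ∈ S, dist (F i z) e ≤ ε :=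
    fun ε hε => by
      obtain ⟨S, hS, happ⟩ := happrox ε hε
      refine ⟨S, hS, fun z => ?_⟩
      obtain ⟨e, heK, he⟩ := happ z
      exact ⟨e, heK, le_of_tendsto ((hr z).dist tendsto_const_nhds) (mem_of_superset hS he), he⟩
  have hunif : TendstoUniformly F r l := Metric.tendstoUniformly_iff.2 fun ε hε => by
    obtain ⟨S, hS, happ⟩ := hlim (ε / 3) (by positivity)
    filter_upwards [hS] with i hi z
    obtain ⟨e, -, hre, he⟩ := happ z
    linarith [dist_triangle_right (r z) (F i z) e, he i hi]
  refine ⟨r, hunif.continuous hF.frequently, fun z => ?_, fun z hz => ?_⟩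
  · refine hK.closure_eq ▸ Metric.mem_closure_iff.2 fun ε hε => ?_
    obtain ⟨_, _, happ⟩ := hlim (ε / 2) (half_pos hε)
    obtain ⟨e, heK, hre, -⟩ := happ z
    exact ⟨e, heK, hre.trans_lt (half_lt_self hε)⟩
  · exact tendsto_nhds_unique (hr z) (tendsto_const_nhds.congr fun i => (hfix i z hz).symm)

end Retract

section AbsoluteRetract

variable {E : Type} [TopologicalSpace E] {K : Set E}

theorem IsAbsoluteRetract.isRetract [TopologicalSpace.MetrizableSpace E] (h : IsAbsoluteRetract K)
    (hK : IsClosed K) : IsRetract K := by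
  obtain ⟨r, hr, hfix⟩ := h.2 E _ inferInstance Subtype.val hK.isClosedEmbedding_subtypeVal
  exact ⟨fun z => r z, by fun_prop, fun z => (r z).2,
    fun z hz => congrArg Subtype.val (hfix ⟨z, hz⟩)⟩

theorem IsRetract.isAbsoluteRetract [TietzeExtension.{0} E] (h : IsRetract K) (hne : K.Nonempty) :
    IsAbsoluteRetract K := by
  obtain ⟨r, hr, hmaps, hfix⟩ := h
  refine ⟨hne.to_subtype, fun Z _ _ f hf => ?_⟩
  obtain ⟨g, hg⟩ := ContinuousMap.exists_extension hf ⟨Subtype.val, continuous_subtype_val⟩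
  refine ⟨fun z => ⟨r (g z), hmaps _⟩, by fun_prop, fun x => Subtype.ext ?_⟩
  have hgx : g (f x) = x := DFunLike.congr_fun hg x
  exact (congrArg r hgx).trans (hfix x x.2)

end AbsoluteRetract

/-! ### Compact sets without pockets -/

section NoPockets

variable {E : Type*} [NormedAddCommGroup E] [NormedSpace ℝ E] {K X Y : Set E}

/-- A quantitative joint form of local connectedness and connectedness of the complement for
plane continua: for every `ε`, a sufficiently small ball centred on `K` cannot be used to cut off
from infinity a point of `Kᶜ` at distance more than `ε` from its centre. -/
def HasNoPockets (K : Set E) : Prop :=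
  ∀ ε > 0, ∃ δ > 0, ∀ x ∈ K, ∀ a ∉ K, ε < dist a x →
    ¬ IsBounded (connectedComponentIn (K ∪ closedBall x δ)ᶜ a)

theorem HasNoPockets.isPreconnected_compl (hK : HasNoPockets K) (hE : 1 < Module.rank ℝ E)
    (hbdd : IsBounded K) (hne : K.Nonempty) : IsPreconnected Kᶜ := by
  obtain ⟨x, hx⟩ := hne
  refine isPreconnected_compl_of_forall_not_isBounded hE hbdd fun a ha hcomp => ?_
  have hax : 0 < dist a x := dist_pos.2 fun h => ha (h ▸ hx)
  obtain ⟨δ, -, hδ⟩ := hK (dist a x / 2) (half_pos hax)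
  exact hδ x hx a ha (half_lt_self hax)
    (hcomp.subset (connectedComponentIn_mono a (compl_subset_compl.2 subset_union_left)))

theorem exists_mem_connectedComponentIn_compl_union_closedBall_notMem
    (hE : 1 < Module.rank ℝ E) {F : Set E} (hF : IsClosed F) (hbdd : IsBounded F) {x₀ x a : E}
    {ε : ℝ} (hε : 0 ≤ ε) (ha : a ∉ connectedComponentIn F x₀) (hax : ε < dist a x) :
    ∃ w ∈ connectedComponentIn (connectedComponentIn F x₀ ∪ closedBall x ε)ᶜ a, w ∉ F := by
  have : Nontrivial E := (rank_pos_iff_nontrivial (R := ℝ)).1 (one_pos.trans hE)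
  refine not_subset.1 fun hWF => ?_
  set K := connectedComponentIn F x₀
  set W := connectedComponentIn (K ∪ closedBall x ε)ᶜ a
  have haW : a ∈ W := mem_connectedComponentIn (by simp [ha, hax])
  have hopen : IsOpen (K ∪ closedBall x ε)ᶜ :=
    ((isClosed_connectedComponentIn hF x₀).union isClosed_closedBall).isOpen_compl
  have hdisj : ∀ z ∈ closure W, z ∉ K := fun z hz hzK => ha <|
    subset_connectedComponentIn_of_closure_inter_nonempty isPreconnected_connectedComponentIn hWF
      ⟨z, hz, hzK⟩ haW
  have houter : (closedBall x ε)ᶜ ⊆ W := by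
    refine (isPreconnected_compl_closedBall hE x hε).subset_of_closure_inter_subset
      hopen.connectedComponentIn ⟨a, by simpa using hax, haW⟩ fun z ⟨hz, hzx⟩ => ?_
    by_contra hzW
    have hzfr : z ∈ frontier W := hopen.connectedComponentIn.frontier_eq ▸ ⟨hz, hzW⟩
    have hzmem := not_not.1 (frontier_connectedComponentIn_subset_compl hopen a hzfr)
    exact hzmem.elim (hdisj z hz) hzx
  exact not_isBounded_compl_closedBall x ε (hbdd.subset (houter.trans hWF))

theorem HasNoPockets.connectedComponentIn_inter (hE : 1 < Module.rank ℝ E)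
    (hX : HasNoPockets X) (hY : HasNoPockets Y) (hXY : IsClosed (X ∩ Y))
    (hbdd : IsBounded (X ∩ Y)) (x₀ : E) :
    HasNoPockets (connectedComponentIn (X ∩ Y) x₀) := by
  intro ε hε
  obtain ⟨δX, hδX, hX⟩ := hX ε hε
  obtain ⟨δY, hδY, hY⟩ := hY ε hε
  refine ⟨min ε (min δX δY), by positivity, fun x hx a ha hax hpocket => ?_⟩
  set K := connectedComponentIn (X ∩ Y) x₀
  set δ := min ε (min δX δY)
  have hKXY : K ⊆ X ∩ Y := connectedComponentIn_subset _ _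
  obtain ⟨w, hwa, hwXY⟩ :=
    exists_mem_connectedComponentIn_compl_union_closedBall_notMem hE hXY hbdd hε.le ha hax
  have hwx : ε < dist w x := by
    simpa using (not_or.1 (connectedComponentIn_subset _ _ hwa)).2
  have hwa' : w ∈ connectedComponentIn (K ∪ closedBall x δ)ᶜ a :=
    connectedComponentIn_mono a (compl_subset_compl.2 <| union_subset_union_right K <|
      closedBall_subset_closedBall (min_le_left _ _)) hwa
  have hlift : ∀ {Z : Set E} {δZ : ℝ}, K ⊆ Z → δ ≤ δZ →
      IsBounded (connectedComponentIn (Z ∪ closedBall x δZ)ᶜ w) := fun hKZ hδZ =>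
    (connectedComponentIn_eq hwa' ▸ hpocket).subset <| connectedComponentIn_mono w <|
      compl_subset_compl.2 <| union_subset_union hKZ (closedBall_subset_closedBall hδZ)
  by_cases hwX : w ∈ X
  · exact hY x (hKXY hx).2 w (fun hwY => hwXY ⟨hwX, hwY⟩) hwx
      (hlift (hKXY.trans inter_subset_right) ((min_le_right _ _).trans (min_le_right _ _)))
  · exact hX x (hKXY hx).1 w hwX hwx
      (hlift (hKXY.trans inter_subset_left) ((min_le_right _ _).trans (min_le_left _ _)))

-- `r z - a` has a logarithm on the simply connected plane, and `r z` is close to `z` near `X`.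
theorem IsRetract.hasNoPockets {K : Set ℂ} (h : IsRetract K) (hK : IsCompact K) :
    HasNoPockets K := by
  obtain ⟨r, hr, hmaps, hfix⟩ := h
  intro ε hε
  obtain ⟨δ, hδ, hδr⟩ := Metric.mem_uniformity_dist.1 <|
    hK.uniformContinuousAt_of_continuousAt r (fun x _ => hr.continuousAt)
      (dist_mem_uniformity (by positivity : 0 < ε / 4))
  refine ⟨min δ (ε / 4) / 2, by positivity, fun x hx a ha hax => ?_⟩
  have hδmin : min δ (ε / 4) / 2 < min δ (ε / 4) := half_lt_self (by positivity)
  have hball : a ∉ closedBall x (min δ (ε / 4) / 2) := fun h => by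
    linarith [mem_closedBall.1 h, min_le_right δ (ε / 4)]
  have hlog : HasLogOn (fun z => r z - a) (K ∪ closedBall x (min δ (ε / 4) / 2)) :=
    hasLogOn_of_continuous (by fun_prop)
      (fun z => sub_ne_zero.2 fun h : r z = a => ha (h ▸ hmaps z)) _
  refine HasLogOn.not_isBounded_connectedComponentIn (hK.isClosed.union isClosed_closedBall)
    (not_or.2 ⟨ha, hball⟩) (hlog.of_dist_lt (by fun_prop) ?_)
  rintro z (hz | hz)
  · simpa [hfix z hz, sub_eq_zero] using fun h : z = a => ha (h ▸ hz)
  · rw [mem_closedBall] at hz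
    have hzx : dist z x < min δ (ε / 4) := hz.trans_lt hδmin
    have hrz : dist x (r z) < ε / 4 := by
      have := hδr (dist_comm x z ▸ hzx.trans_le (min_le_left _ _)) hx
      rwa [mem_ofPred_eq, hfix x hx] at this
    rw [dist_sub_right, ← dist_eq_norm]
    linarith [dist_triangle z x (r z), dist_triangle_left a x (r z), min_le_right δ (ε / 4),
      dist_comm (r z) a, dist_comm (r z) x]

end NoPockets

/-! ### Univalent functions -/

section Univalent

open Complex

variable {Ω : Set ℂ} {f g : ℂ → ℂ} {z : ℂ}

theorem HasLogOn.exists_differentiableOn (h : HasLogOn g Ω) (hΩ : IsOpen Ω)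
    (hg : DifferentiableOn ℂ g Ω) :
    ∃ l : ℂ → ℂ, DifferentiableOn ℂ l Ω ∧ ∀ z ∈ Ω, exp (l z) = g z := by
  obtain ⟨l, hl, hexp⟩ := h
  refine ⟨l, fun z hz => ?_, hexp⟩
  have hclose : ∀ᶠ y in 𝓝 z, dist (l y) (l z) < Real.pi :=
    (hl.continuousAt (hΩ.mem_nhds hz)).eventually (ball_mem_nhds _ Real.pi_pos)
  have heq : l =ᶠ[𝓝 z] fun y => log (g y / g z) + l z := by
    filter_upwards [hclose, hΩ.mem_nhds hz] with y hy hyΩ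
    have him := abs_lt.1 ((abs_im_le_norm (l y - l z)).trans_lt (dist_eq_norm (l y) _ ▸ hy))
    rw [← hexp y hyΩ, ← hexp z hz, ← exp_sub, log_exp him.1 him.2.le, sub_add_cancel]
  have hgz : g z ≠ 0 := hexp z hz ▸ exp_ne_zero _
  refine (DifferentiableAt.congr_of_eventuallyEq ?_ heq).differentiableWithinAt
  refine (((hg.differentiableAt (hΩ.mem_nhds hz)).div_const _).clog ?_).add_const _
  rw [div_self hgz]
  exact one_mem_slitPlane

/-- Univalent functions: holomorphic and injective. -/
structure IsUnivalentOn (f : ℂ → ℂ) (Ω : Set ℂ) : Prop where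
  differentiableOn : DifferentiableOn ℂ f Ω
  injOn : InjOn f Ω

theorem IsUnivalentOn.exists_sqrt (hg : IsUnivalentOn g Ω) (hΩ : IsOpen Ω) (h : HasLogOn g Ω) :
    ∃ s, IsUnivalentOn s Ω ∧ ∀ z ∈ Ω, s z ^ 2 = g z := by
  obtain ⟨l, hl, hexp⟩ := h.exists_differentiableOn hΩ hg.differentiableOn
  have hsq : ∀ z ∈ Ω, exp (l z / 2) ^ 2 = g z := fun z hz => by
    rw [← exp_nat_mul, Nat.cast_ofNat, mul_div_cancel₀ _ two_ne_zero, hexp z hz]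
  refine ⟨fun z => exp (l z / 2), ⟨(hl.div_const 2).cexp, fun a ha b hb hab => ?_⟩, hsq⟩
  exact hg.injOn ha hb (by rw [← hsq a ha, ← hsq b hb]; exact congrArg (· ^ 2) hab)

theorem IsUnivalentOn.isOpen_image (hf : IsUnivalentOn f Ω) (hΩ : IsOpen Ω) {s : Set ℂ}
    (hsΩ : s ⊆ Ω) (hs : IsOpen s) : IsOpen (f '' s) := by
  refine isOpen_iff_mem_nhds.2 ?_
  rintro _ ⟨z, hz, rfl⟩
  have hzΩ := hΩ.mem_nhds (hsΩ hz)
  refine (hf.differentiableOn.analyticAt hzΩ).eventually_constant_or_nhds_le_map_nhds.resolve_left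
    (fun hconst => ?_) (image_mem_map (hs.mem_nhds hz))
  have hsing : ∀ᶠ w in 𝓝[≠] z, w = z := nhdsWithin_le_nhds <| by
    filter_upwards [hconst, hzΩ] with w hw hwΩ using hf.injOn hwΩ (hsΩ hz) hw
  obtain ⟨w, hw, hne⟩ := (hsing.and eventually_mem_nhdsWithin).exists
  exact hne hw

theorem IsUnivalentOn.continuousAt_invFunOn (hf : IsUnivalentOn f Ω) (hΩ : IsOpen Ω)
    (hz : z ∈ Ω) : ContinuousAt (Function.invFunOn f Ω) (f z) := by
  intro N hN
  rw [hf.injOn.leftInvOn_invFunOn hz] at hN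
  obtain ⟨s, hsN, hs, hzs⟩ := _root_.mem_nhds_iff.1 (inter_mem hN (hΩ.mem_nhds hz))
  refine mem_map.2 (mem_of_superset
    ((hf.isOpen_image hΩ (fun w hw => (hsN hw).2) hs).mem_nhds ⟨z, hzs, rfl⟩) ?_)
  rintro _ ⟨w, hw, rfl⟩
  rw [mem_preimage, hf.injOn.leftInvOn_invFunOn (hsN hw).2]
  exact (hsN hw).1

theorem IsUnivalentOn.eventually_deriv_ne_zero (hf : IsUnivalentOn f Ω) (hΩ : IsOpen Ω)
    (hz : z ∈ Ω) : ∀ᶠ w in 𝓝[≠] z, deriv f w ≠ 0 := by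
  have hzΩ := hΩ.mem_nhds hz
  refine (hf.differentiableOn.analyticAt hzΩ).deriv.eventually_eq_zero_or_eventually_ne_zero
    |>.resolve_left fun hzero => ?_
  obtain ⟨ρ, hρ, hball⟩ := Metric.mem_nhds_iff.1 (inter_mem hzero hzΩ)
  obtain ⟨w, hwz, hw⟩ := ((eventually_mem_nhdsWithin (s := {z}ᶜ)).and
    (nhdsWithin_le_nhds (ball_mem_nhds z hρ))).exists
  have hfw : f w = f z := isOpen_ball.is_const_of_deriv_eq_zero (convex_ball z ρ).isPreconnected
    (hf.differentiableOn.mono fun x hx => (hball hx).2) (fun x hx => (hball hx).1) hw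
    (mem_ball_self hρ)
  exact hwz (hf.injOn (hball hw).2 hz hfw)

theorem IsUnivalentOn.differentiableOn_invFunOn (hf : IsUnivalentOn f Ω) (hΩ : IsOpen Ω) :
    DifferentiableOn ℂ (Function.invFunOn f Ω) (f '' Ω) := by
  have hopen := hf.isOpen_image hΩ subset_rfl hΩ
  have hleft := hf.injOn.leftInvOn_invFunOn
  have hreg : ∀ z ∈ Ω, deriv f z ≠ 0 → DifferentiableAt ℂ (Function.invFunOn f Ω) (f z) := by
    intro z hz hderiv
    refine (HasDerivAt.of_local_left_inverse (hf.continuousAt_invFunOn hΩ hz) (f := f) ?_ hderiv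
      ?_).differentiableAt
    · rw [hleft hz]
      exact (hf.differentiableOn.differentiableAt (hΩ.mem_nhds hz)).hasDerivAt
    · filter_upwards [hopen.mem_nhds ⟨z, hz, rfl⟩] with w hw using Function.invFunOn_eq hw
  rintro _ ⟨z, hz, rfl⟩
  have hcont := hf.continuousAt_invFunOn hΩ hz
  have hpunctured : ∀ᶠ w in 𝓝 (f z), w ≠ f z → DifferentiableAt ℂ (Function.invFunOn f Ω) w := by
    have hderiv := eventually_nhdsWithin_iff.1 (hf.eventually_deriv_ne_zero hΩ hz)
    rw [← hleft hz] at hderiv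
    filter_upwards [hcont.eventually hderiv, hopen.mem_nhds ⟨z, hz, rfl⟩]
    rintro _ hy ⟨y, hyΩ, rfl⟩ hne
    rw [hleft hyΩ, hleft hz] at hy
    exact hreg y hyΩ (hy (ne_of_apply_ne f hne))
  -- The values at the critical points of `f` are isolated, hence removable singularities.
  have hremove := (differentiableOn_compl_singleton_and_continuousAt_iff hpunctured).1
    ⟨fun w hw => (hw.1 hw.2).differentiableWithinAt, hcont⟩
  exact (hremove.differentiableAt hpunctured).differentiableWithinAt

theorem IsUnivalentOn.deriv_ne_zero (hf : IsUnivalentOn f Ω) (hΩ : IsOpen Ω) (hz : z ∈ Ω) :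
    deriv f z ≠ 0 := by
  intro hzero
  have hinv := ((hf.differentiableOn_invFunOn hΩ).differentiableAt
    ((hf.isOpen_image hΩ subset_rfl hΩ).mem_nhds ⟨z, hz, rfl⟩)).hasDerivAt
  have hcomp := hinv.comp z (hf.differentiableOn.differentiableAt (hΩ.mem_nhds hz)).hasDerivAt
  have hid : id =ᶠ[𝓝 z] Function.invFunOn f Ω ∘ f := by
    filter_upwards [hΩ.mem_nhds hz] with w hw using (hf.injOn.leftInvOn_invFunOn hw).symm
  simpa [hzero] using (hcomp.congr_of_eventuallyEq hid).unique (hasDerivAt_id z)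

end Univalent

section LocallyUniformLimit

variable {ι E : Type*} [NormedAddCommGroup E] [NormedSpace ℂ E] {p : Filter ι} {Ω : Set ℂ}

theorem equicontinuousAt_of_norm_le (hΩ : IsOpen Ω) {F : ι → ℂ → E} {M : ℝ}
    (hF : ∀ i, DifferentiableOn ℂ (F i) Ω) (hM : ∀ i, ∀ z ∈ Ω, ‖F i z‖ ≤ M) {z : ℂ}
    (hz : z ∈ Ω) : EquicontinuousAt F z := by
  obtain ⟨ρ, hρ, hρΩ⟩ := Metric.isOpen_iff.1 hΩ z hz
  have hmodulus : Tendsto (fun w => (M + M) / ρ * dist w z) (𝓝 z) (𝓝 0) := by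
    have hcont : Continuous fun w => (M + M) / ρ * dist w z := by fun_prop
    simpa using hcont.tendsto z
  refine Metric.equicontinuousAt_of_continuity_modulus _ hmodulus F ?_
  filter_upwards [ball_mem_nhds z hρ] with w hw i
  rw [dist_comm]
  refine Complex.dist_le_div_mul_dist_of_mapsTo_ball ((hF i).mono hρΩ) (fun x hx => ?_) hw
  rw [mem_closedBall, dist_eq_norm]
  exact (norm_sub_le _ _).trans (add_le_add (hM i x (hρΩ hx)) (hM i z hz))

theorem tendstoLocallyUniformlyOn_of_norm_le (hΩ : IsOpen Ω) {F : ι → ℂ → E} {f : ℂ → E} {M : ℝ}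
    (hF : ∀ i, DifferentiableOn ℂ (F i) Ω) (hM : ∀ i, ∀ z ∈ Ω, ‖F i z‖ ≤ M)
    (hlim : ∀ z ∈ Ω, Tendsto (fun i => F i z) p (𝓝 (f z))) :
    TendstoLocallyUniformlyOn F f p Ω := by
  refine (tendstoLocallyUniformlyOn_iff_forall_isCompact hΩ).2 fun K hKΩ hK => ?_
  have hequi : EquicontinuousOn F K := fun z hz =>
    (equicontinuousAt_of_norm_le hΩ hF hM (hKΩ hz)).equicontinuousWithinAt K
  have hpointwise := EquicontinuousOn.tendsto_uniformOnFun_iff_pi' (𝔖 := {K})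
    (by simpa using hK) (by simpa using hequi) p f
  refine UniformOnFun.tendsto_iff_tendstoUniformlyOn.1 (hpointwise.2 ?_) K rfl
  refine tendsto_pi_nhds.2 fun z => hlim z (hKΩ ?_)
  simpa using z.2

theorem eventually_ne_of_nontrivial_image {f : ℂ → E} (hf : AnalyticOnNhd ℂ f Ω)
    (hconn : IsPreconnected Ω) (hne : (f '' Ω).Nontrivial) {b : ℂ} (hb : b ∈ Ω) :
    ∀ᶠ z in 𝓝[≠] b, f z ≠ f b := by
  refine ((hf b hb).eventually_eq_or_eventually_ne analyticAt_const).resolve_left fun hconst => ?_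
  have heq := hf.eqOn_of_preconnected_of_eventuallyEq analyticOnNhd_const hconn hb hconst
  exact hne.not_subsingleton <| subsingleton_singleton.anti <| image_subset_iff.2 heq

theorem exists_closedBall_subset_forall_mem_sphere_le (hΩ : IsOpen Ω) {f : ℂ → ℂ}
    (hf : ContinuousOn f Ω) {b : ℂ} (hb : b ∈ Ω) (hisolated : ∀ᶠ z in 𝓝[≠] b, f z ≠ f b) :
    ∃ ρ > 0, closedBall b ρ ⊆ Ω ∧ ∃ m > 0, ∀ z ∈ sphere b ρ, m ≤ ‖f z - f b‖ := by
  obtain ⟨ρ, hρ, hsub⟩ := nhds_basis_closedBall.mem_iff.1 <|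
    inter_mem (eventually_nhdsWithin_iff.1 hisolated) (hΩ.mem_nhds hb)
  have hsphere : ∀ z ∈ sphere b ρ, 0 < ‖f z - f b‖ := fun z hz => norm_pos_iff.2 <|
    sub_ne_zero.2 <| (hsub (sphere_subset_closedBall hz)).1 (ne_of_mem_sphere hz hρ.ne')
  obtain ⟨m, hm, hmin⟩ := (isCompact_sphere b ρ).exists_forall_le'
    ((hf.mono fun z hz => (hsub (sphere_subset_closedBall hz)).2).sub continuousOn_const).norm
    hsphere
  exact ⟨ρ, hρ, fun z hz => (hsub hz).2, m, hm, hmin⟩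

/-- **Hurwitz's theorem** for injective functions. -/
theorem injOn_of_tendstoLocallyUniformlyOn (hΩ : IsOpen Ω) (hconn : IsPreconnected Ω)
    {F : ι → ℂ → ℂ} {f : ℂ → ℂ} (hF : ∀ᶠ i in p, DifferentiableOn ℂ (F i) Ω)
    (hinj : ∃ᶠ i in p, InjOn (F i) Ω) (hlim : TendstoLocallyUniformlyOn F f p Ω)
    (hne : (f '' Ω).Nontrivial) : InjOn f Ω := by
  have : p.NeBot := ⟨by rintro rfl; simp at hinj⟩
  intro a ha b hb hab
  by_contra hab'
  have hf : AnalyticOnNhd ℂ f Ω := (hlim.differentiableOn hF hΩ).analyticOnNhd hΩ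
  obtain ⟨ρ, hρ, hsub, m, hm, hmin⟩ := exists_closedBall_subset_forall_mem_sphere_le
    (hΩ.sdiff isClosed_singleton) (hf.continuousOn.mono sdiff_subset)
    (mem_sdiff_singleton.2 ⟨hb, Ne.symm hab'⟩) (eventually_ne_of_nontrivial_image hf hconn hne hb)
  have hρΩ := hsub.trans sdiff_subset
  have hunif : TendstoUniformlyOn F f p (insert a (closedBall b ρ)) :=
    (tendstoLocallyUniformlyOn_iff_forall_isCompact hΩ).1 hlim _ (insert_subset ha hρΩ)
      ((isCompact_closedBall b ρ).insert a)
  obtain ⟨n, hn, hFn, hclose⟩ := (hinj.and_eventually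
    (hF.and (Metric.tendstoUniformlyOn_iff.1 hunif (m / 8) (by positivity)))).exists
  have hclose_a := hclose a (mem_insert _ _)
  have hclose_b := hclose b (mem_insert_of_mem _ (mem_closedBall_self hρ.le))
  have hsphere : ∀ z ∈ sphere b ρ, m / 2 ≤ ‖F n z - F n b‖ := fun z hz => by
    have hclose_z := hclose z (mem_insert_of_mem _ (sphere_subset_closedBall hz))
    have hmz := hmin z hz
    rw [← dist_eq_norm] at hmz ⊢
    linarith [dist_triangle4_right (f z) (f b) (F n z) (F n b)]
  have hcover := DiffContOnCl.ball_subset_image_closedBall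
    ((closure_ball b hρ.ne' ▸ hFn.mono hρΩ).diffContOnCl) hρ hsphere <|
      Eventually.frequently (f := 𝓝[≠] b) (by
        filter_upwards [eventually_mem_nhdsWithin, nhdsWithin_le_nhds (hΩ.mem_nhds hb)]
          with z hz hzΩ using hn.ne hzΩ hb hz) |>.filter_mono nhdsWithin_le_nhds
  obtain ⟨c, hc, hca⟩ := hcover (show F n a ∈ ball (F n b) (m / 2 / 2) by
    rw [mem_ball]
    rw [hab, dist_comm] at hclose_a
    linarith [dist_triangle (F n a) (f b) (F n b)])
  exact (hsub hc).2 (hn (hρΩ hc) ha hca)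

end LocallyUniformLimit

/-! ### The Riemann mapping theorem -/

section Mobius

open Complex ComplexConjugate

variable {c w : ℂ} {Ω : Set ℂ} {f : ℂ → ℂ}

/-- The automorphism of the unit disk which takes `c` to `0`. -/
noncomputable def mobius (c w : ℂ) : ℂ := (w - c) / (1 - conj c * w)

@[simp]
theorem mobius_self (c : ℂ) : mobius c c = 0 := by simp [mobius]

@[simp]
theorem mobius_zero_right (c : ℂ) : mobius c 0 = -c := by simp [mobius]

theorem mobius_denom_ne_zero (hc : ‖c‖ < 1) (hw : ‖w‖ < 1) : 1 - conj c * w ≠ 0 := by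
  refine sub_ne_zero.2 fun h => ?_
  have hlt : ‖conj c * w‖ < 1 := by
    rw [norm_mul, RCLike.norm_conj]
    exact mul_lt_one_of_nonneg_of_lt_one_left (norm_nonneg c) hc hw.le
  exact hlt.ne (h ▸ norm_one)

theorem norm_mobius_lt_one (hc : ‖c‖ < 1) (hw : ‖w‖ < 1) : ‖mobius c w‖ < 1 := by
  have hid : ‖1 - conj c * w‖ ^ 2 - ‖w - c‖ ^ 2 = (1 - ‖c‖ ^ 2) * (1 - ‖w‖ ^ 2) := by
    simp only [← normSq_eq_norm_sq, normSq_apply, sub_re, sub_im, mul_re, mul_im, conj_re, conj_im,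
      one_re, one_im]
    ring
  have hpos : 0 < (1 - ‖c‖ ^ 2) * (1 - ‖w‖ ^ 2) := by
    apply mul_pos <;> nlinarith [norm_nonneg c, norm_nonneg w]
  rw [mobius, norm_div, div_lt_one (norm_pos_iff.2 (mobius_denom_ne_zero hc hw))]
  exact lt_of_pow_lt_pow_left₀ 2 (norm_nonneg _) (by linarith)

theorem injOn_mobius (hc : ‖c‖ < 1) : InjOn (mobius c) (ball 0 1) := by
  intro w hw w' hw' h
  rw [mem_ball_zero_iff] at hw hw'
  rw [mobius, mobius,
    div_eq_div_iff (mobius_denom_ne_zero hc hw) (mobius_denom_ne_zero hc hw')] at h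
  have hfactor : (1 - conj c * c) * (w - w') = 0 := by linear_combination h
  exact sub_eq_zero.1 ((mul_eq_zero.1 hfactor).resolve_left (mobius_denom_ne_zero hc hc))

theorem hasDerivAt_mobius (hc : ‖c‖ < 1) (hw : ‖w‖ < 1) :
    HasDerivAt (mobius c) ((1 - ‖c‖ ^ 2) / (1 - conj c * w) ^ 2) w := by
  have hnum : HasDerivAt (fun w : ℂ => w - c) 1 w := (hasDerivAt_id w).sub_const c
  have hden : HasDerivAt (fun w : ℂ => 1 - conj c * w) (-conj c) w := by
    simpa using ((hasDerivAt_id w).const_mul (conj c)).const_sub 1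
  refine (hnum.div hden (mobius_denom_ne_zero hc hw)).congr_deriv ?_
  rw [← conj_mul']
  ring

theorem hasDerivAt_mobius_self (hc : ‖c‖ < 1) :
    HasDerivAt (mobius c) (1 - ‖c‖ ^ 2 : ℂ)⁻¹ c := by
  refine (hasDerivAt_mobius hc hc).congr_deriv ?_
  have hne := mobius_denom_ne_zero hc hc
  rw [conj_mul'] at hne ⊢
  field_simp

theorem IsUnivalentOn.mobius_comp (hf : IsUnivalentOn f Ω) (hmaps : MapsTo f Ω (ball 0 1))
    (hc : ‖c‖ < 1) : IsUnivalentOn (mobius c ∘ f) Ω where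
  differentiableOn z hz := (hasDerivAt_mobius hc (mem_ball_zero_iff.1 (hmaps hz))).differentiableAt
    |>.comp_differentiableWithinAt z (hf.differentiableOn z hz)
  injOn := (injOn_mobius hc).comp hf.injOn hmaps

end Mobius

section RiemannMap

variable {Ω : Set ℂ} {f g : ℂ → ℂ} {z₀ : ℂ}

/-- Nonvanishing univalent functions on `Ω` have logarithms: the form of simple connectedness which
the proof of the Riemann mapping theorem uses. -/
def HasUnivalentLogs (Ω : Set ℂ) : Prop :=
  ∀ g, IsUnivalentOn g Ω → (∀ z ∈ Ω, g z ≠ 0) → HasLogOn g Ω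

/-- The competitors in the extremal problem defining the Riemann map of `Ω` at `z₀`. -/
structure IsNormalizedDiskMap (Ω : Set ℂ) (z₀ : ℂ) (f : ℂ → ℂ) : Prop
    extends IsUnivalentOn f Ω where
  mapsTo : MapsTo f Ω (ball 0 1)
  map_base : f z₀ = 0

theorem HasUnivalentLogs.exists_isUnivalentOn_norm_le (H : HasUnivalentLogs Ω) (hΩ : IsOpen Ω)
    (hz₀ : z₀ ∈ Ω) (hne : Ω ≠ univ) :
    ∃ g M, IsUnivalentOn g Ω ∧ ∀ z ∈ Ω, ‖g z‖ ≤ M := by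
  obtain ⟨q, hq⟩ := (ne_univ_iff_exists_notMem _).1 hne
  have hsub : IsUnivalentOn (fun z => z - q) Ω := ⟨by fun_prop, (sub_left_injective).injOn⟩
  have hsub_ne : ∀ z ∈ Ω, z - q ≠ 0 := fun z hz => sub_ne_zero.2 (ne_of_mem_of_not_mem hz hq)
  obtain ⟨s, hs, hsq⟩ := hsub.exists_sqrt hΩ (H _ hsub hsub_ne)
  obtain ⟨r, hr, hball⟩ := Metric.isOpen_iff.1 (hs.isOpen_image hΩ subset_rfl hΩ) (s z₀)
    ⟨z₀, hz₀, rfl⟩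
  -- The square root omits the negatives of its values.
  have hfar : ∀ z ∈ Ω, r ≤ ‖s z + s z₀‖ := by
    intro z hz
    by_contra! hlt
    obtain ⟨y, hy, hyz⟩ := hball (show -s z ∈ ball (s z₀) r by
      rwa [mem_ball, dist_comm, dist_eq_norm, sub_neg_eq_add, add_comm])
    have hyeq : y = z := by
      have := hsq y hy
      rw [hyz, neg_sq, hsq z hz] at this
      exact (sub_left_injective this).symm
    have hs0 : s z = 0 := by rw [hyeq] at hyz; exact self_eq_neg.1 hyz
    exact hsub_ne z hz (by rw [← hsq z hz, hs0, zero_pow two_ne_zero])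
  refine ⟨fun z => (s z + s z₀)⁻¹, r⁻¹, ⟨?_, fun a ha b hb hab => ?_⟩, fun z hz => ?_⟩
  · exact (hs.differentiableOn.add_const _).inv fun z hz => norm_pos_iff.1 (hr.trans_le (hfar z hz))
  · exact hs.injOn ha hb (add_right_cancel (inv_injective hab))
  · rw [norm_inv]
    exact inv_anti₀ hr (hfar z hz)

theorem HasUnivalentLogs.exists_isNormalizedDiskMap (H : HasUnivalentLogs Ω) (hΩ : IsOpen Ω)
    (hz₀ : z₀ ∈ Ω) (hne : Ω ≠ univ) : ∃ f, IsNormalizedDiskMap Ω z₀ f := by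
  obtain ⟨g, M, hg, hM⟩ := H.exists_isUnivalentOn_norm_le hΩ hz₀ hne
  have hM0 : 0 ≤ M := (norm_nonneg _).trans (hM z₀ hz₀)
  have hden : ((2 * M + 1 : ℝ) : ℂ) ≠ 0 := by exact_mod_cast (by positivity : 2 * M + 1 ≠ 0)
  refine ⟨fun z => (g z - g z₀) / (2 * M + 1 : ℝ), ⟨?_, fun a ha b hb hab => ?_⟩, fun z hz => ?_,
    by simp⟩
  · exact (hg.differentiableOn.sub_const _).div_const _
  · exact hg.injOn ha hb (sub_left_injective ((div_left_inj' hden).1 hab))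
  · rw [mem_ball_zero_iff, norm_div, Complex.norm_real, Real.norm_of_nonneg (by positivity),
      div_lt_one (by positivity)]
    linarith [norm_sub_le (g z) (g z₀), hM z hz, hM z₀ hz₀]

theorem norm_lt_norm_deriv_mobius_comp {s : ℂ → ℂ} {c f' : ℂ} (hc : ‖c‖ < 1)
    (hf : HasDerivAt f f' z₀) (hf0 : f z₀ = 0) (hs : DifferentiableAt ℂ s z₀) (hs1 : ‖s z₀‖ < 1)
    (hc0 : c ≠ 0) (hf' : f' ≠ 0) (hsq : ∀ᶠ z in 𝓝 z₀, s z ^ 2 = mobius c (f z)) :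
    ‖f'‖ < ‖deriv (mobius (s z₀) ∘ s) z₀‖ := by
  have hsc : ‖s z₀‖ ^ 2 = ‖c‖ := by
    rw [← norm_pow, hsq.self_of_nhds, hf0, mobius_zero_right, norm_neg]
  have hs0 : 0 < ‖s z₀‖ := norm_pos_iff.2 fun h => hc0 (by simpa [h] using hsc.symm)
  have hpos : 0 < 1 - ‖s z₀‖ ^ 2 := by nlinarith
  have hmobius : HasDerivAt (mobius c) (1 - ‖c‖ ^ 2 : ℂ) (f z₀) := by
    simpa [hf0] using hasDerivAt_mobius (w := f z₀) hc (by simp [hf0])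
  have hrel : 2 * s z₀ * deriv s z₀ = (1 - ‖c‖ ^ 2) * f' := by
    simpa using (hs.hasDerivAt.pow 2).unique ((hmobius.comp z₀ hf).congr_of_eventuallyEq hsq)
  have hnorm : 2 * ‖s z₀‖ * ‖deriv s z₀‖ = (1 - ‖s z₀‖ ^ 4) * ‖f'‖ := by
    have hpos4 : 0 ≤ 1 - ‖c‖ ^ 2 := by nlinarith [norm_nonneg c]
    rw [show (1 - ‖c‖ ^ 2 : ℂ) = (1 - ‖c‖ ^ 2 : ℝ) by push_cast; rfl] at hrel
    have := congrArg norm hrel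
    rwa [norm_mul, norm_mul, norm_mul, RCLike.norm_ofNat, Complex.norm_real,
      Real.norm_of_nonneg hpos4, ← hsc, ← pow_mul] at this
  have hderiv := ((hasDerivAt_mobius_self hs1).comp z₀ hs.hasDerivAt).deriv
  rw [hderiv, norm_mul, norm_inv,
    show (1 - ‖s z₀‖ ^ 2 : ℂ) = (1 - ‖s z₀‖ ^ 2 : ℝ) by push_cast; rfl, Complex.norm_real,
    Real.norm_of_nonneg hpos.le, inv_mul_eq_div, lt_div_iff₀ hpos]
  -- After multiplication by `2 b`, where `b = ‖s z₀‖`, this reduces to `2 b < 1 + b ^ 2`.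
  refine lt_of_mul_lt_mul_left ?_ (mul_pos two_pos hs0).le
  rw [hnorm]
  have : 0 < (1 - ‖s z₀‖ ^ 2) * (1 - ‖s z₀‖) ^ 2 * ‖f'‖ := by
    have := sub_pos.2 hs1
    have := norm_pos_iff.2 hf'
    positivity
  linear_combination this

/-- Koebe's square root trick. -/
theorem IsNormalizedDiskMap.exists_norm_deriv_lt (hf : IsNormalizedDiskMap Ω z₀ f) (hΩ : IsOpen Ω)
    (hz₀ : z₀ ∈ Ω) (H : HasUnivalentLogs Ω) {c : ℂ} (hc : ‖c‖ < 1) (hcΩ : c ∉ f '' Ω) :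
    ∃ F, IsNormalizedDiskMap Ω z₀ F ∧ ‖deriv f z₀‖ < ‖deriv F z₀‖ := by
  have hg := hf.mobius_comp hf.mapsTo hc
  have hg_norm : ∀ z ∈ Ω, ‖mobius c (f z)‖ < 1 := fun z hz =>
    norm_mobius_lt_one hc (mem_ball_zero_iff.1 (hf.mapsTo hz))
  obtain ⟨s, hs, hsq⟩ := hg.exists_sqrt hΩ (H _ hg fun z hz => div_ne_zero
    (sub_ne_zero.2 fun h => hcΩ ⟨z, hz, h⟩)
    (mobius_denom_ne_zero hc (mem_ball_zero_iff.1 (hf.mapsTo hz))))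
  have hs_maps : MapsTo s Ω (ball 0 1) := fun z hz => mem_ball_zero_iff.2 <| by
    rw [← sq_lt_one_iff₀ (norm_nonneg _), ← norm_pow, hsq z hz]
    exact hg_norm z hz
  have hβ : ‖s z₀‖ < 1 := mem_ball_zero_iff.1 (hs_maps hz₀)
  refine ⟨mobius (s z₀) ∘ s, ⟨hs.mobius_comp hs_maps hβ, fun z hz => mem_ball_zero_iff.2 <|
    norm_mobius_lt_one hβ (mem_ball_zero_iff.1 (hs_maps hz)), mobius_self _⟩, ?_⟩
  have hzΩ := hΩ.mem_nhds hz₀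
  refine norm_lt_norm_deriv_mobius_comp hc
    (hf.differentiableOn.differentiableAt hzΩ).hasDerivAt hf.map_base
    (hs.differentiableOn.differentiableAt hzΩ) hβ ?_ (hf.deriv_ne_zero hΩ hz₀) ?_
  · rintro rfl
    exact hcΩ ⟨z₀, hz₀, hf.map_base⟩
  · filter_upwards [hzΩ] with z hz using hsq z hz

theorem exists_tendsto_ultrafilter_of_norm_le {ι X E : Type*} [NormedAddCommGroup E]
    [ProperSpace E] (p : Ultrafilter ι) {F : ι → X → E} {S : Set X} {M : ℝ}
    (hM : ∀ i, ∀ z ∈ S, ‖F i z‖ ≤ M) :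
    ∃ f : X → E, ∀ z ∈ S, Tendsto (fun i => F i z) p (𝓝 (f z)) := by
  have hlim : ∀ z : S, ∃ y, Tendsto (fun i => F i z) p (𝓝 y) := fun z => by
    obtain ⟨y, -, hy⟩ := (isCompact_closedBall (0 : E) M).ultrafilter_le_nhds (p.map (F · z)) <|
      le_principal_iff.2 <| mem_map.2 <| Eventually.of_forall fun i =>
        mem_closedBall_zero_iff.2 (hM i z z.2)
    exact ⟨y, hy⟩
  choose f hf using hlim
  classical
  exact ⟨fun z => if hz : z ∈ S then f ⟨z, hz⟩ else 0, fun z hz => by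
    simpa [hz] using hf ⟨z, hz⟩⟩

theorem bddAbove_norm_deriv_isNormalizedDiskMap (hΩ : IsOpen Ω) (hz₀ : z₀ ∈ Ω) :
    BddAbove ((fun f => ‖deriv f z₀‖) '' {f | IsNormalizedDiskMap Ω z₀ f}) := by
  obtain ⟨ρ, hρ, hρΩ⟩ := Metric.isOpen_iff.1 hΩ z₀ hz₀
  refine ⟨1 / ρ, ?_⟩
  rintro _ ⟨f, hf, rfl⟩
  refine Complex.norm_deriv_le_div_of_mapsTo_ball (hf.differentiableOn.mono hρΩ) ?_ hρ
  rw [hf.map_base]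
  exact (hf.mapsTo.mono_left hρΩ).mono_right ball_subset_closedBall

theorem IsNormalizedDiskMap.of_tendsto {ι : Type*} {p : Filter ι} [p.NeBot] {F : ι → ℂ → ℂ}
    (hΩ : IsOpen Ω) (hconn : IsPreconnected Ω) (hz₀ : z₀ ∈ Ω)
    (hF : ∀ i, IsNormalizedDiskMap Ω z₀ (F i)) (hlim : TendstoLocallyUniformlyOn F f p Ω)
    (hderiv : deriv f z₀ ≠ 0) : IsNormalizedDiskMap Ω z₀ f := by
  have hdiff : ∀ᶠ i in p, DifferentiableOn ℂ (F i) Ω := .of_forall fun i => (hF i).differentiableOn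
  have hf : DifferentiableOn ℂ f Ω := hlim.differentiableOn hdiff hΩ
  have hbase : f z₀ = 0 := by
    have := hlim.tendsto_at hz₀
    simp only [(hF _).map_base] at this
    exact tendsto_nhds_unique this tendsto_const_nhds
  have hle : ∀ z ∈ Ω, ‖f z‖ ≤ 1 := fun z hz => le_of_tendsto (hlim.tendsto_at hz).norm <|
    Eventually.of_forall fun i => (mem_ball_zero_iff.1 ((hF i).mapsTo hz)).le
  have hnontrivial : (f '' Ω).Nontrivial := by
    by_contra hconst
    refine hderiv ?_
    have heq : f =ᶠ[𝓝 z₀] fun _ => f z₀ := by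
      filter_upwards [hΩ.mem_nhds hz₀] with z hz using
        not_nontrivial_iff.1 hconst ⟨z, hz, rfl⟩ ⟨z₀, hz₀, rfl⟩
    rw [heq.deriv_eq, deriv_const]
  refine ⟨⟨hf, injOn_of_tendstoLocallyUniformlyOn hΩ hconn hdiff
    (Eventually.of_forall fun i => (hF i).injOn).frequently hlim hnontrivial⟩,
    fun z hz => ?_, hbase⟩
  refine mem_ball_zero_iff.2 ((hle z hz).lt_of_ne fun hmax => ?_)
  have hconst := Complex.eqOn_of_isPreconnected_of_isMaxOn_norm hconn hΩ hf hz
    (fun w hw => by simpa [hmax] using hle w hw) hz₀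
  rw [Function.const_apply, hbase] at hconst
  exact one_ne_zero (hmax.symm.trans (by rw [← hconst, norm_zero]))

theorem HasUnivalentLogs.exists_isMaxOn_norm_deriv (H : HasUnivalentLogs Ω) (hΩ : IsOpen Ω)
    (hconn : IsPreconnected Ω) (hz₀ : z₀ ∈ Ω) (hne : Ω ≠ univ) :
    ∃ f, IsNormalizedDiskMap Ω z₀ f ∧
      IsMaxOn (fun g => ‖deriv g z₀‖) {g | IsNormalizedDiskMap Ω z₀ g} f := by
  obtain ⟨f₀, hf₀⟩ := H.exists_isNormalizedDiskMap hΩ hz₀ hne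
  set D := (fun f => ‖deriv f z₀‖) '' {f | IsNormalizedDiskMap Ω z₀ f}
  have hbdd : BddAbove D := bddAbove_norm_deriv_isNormalizedDiskMap hΩ hz₀
  obtain ⟨u, -, hu, hmem⟩ := exists_seq_tendsto_sSup (S := D) ⟨_, f₀, hf₀, rfl⟩ hbdd
  choose F hF hFu using hmem
  have hFle : ∀ n, ∀ z ∈ Ω, ‖F n z‖ ≤ 1 := fun n z hz =>
    (mem_ball_zero_iff.1 ((hF n).mapsTo hz)).le
  obtain ⟨f, hf⟩ := exists_tendsto_ultrafilter_of_norm_le (hyperfilter ℕ) hFle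
  have hlim := tendstoLocallyUniformlyOn_of_norm_le hΩ (fun n => (hF n).differentiableOn) hFle hf
  have hderiv : ‖deriv f z₀‖ = sSup D := by
    refine tendsto_nhds_unique ((hlim.deriv (.of_forall fun n => (hF n).differentiableOn)
      hΩ).tendsto_at hz₀).norm ?_
    simpa only [Function.comp, hFu] using hu.mono_left Nat.hyperfilter_le_atTop
  have hle : ∀ g, IsNormalizedDiskMap Ω z₀ g → ‖deriv g z₀‖ ≤ ‖deriv f z₀‖ := fun g hg =>
    hderiv ▸ le_csSup hbdd ⟨g, hg, rfl⟩
  exact ⟨f, .of_tendsto hΩ hconn hz₀ hF hlim <| norm_pos_iff.1 <|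
    (norm_pos_iff.2 (hf₀.deriv_ne_zero hΩ hz₀)).trans_le (hle f₀ hf₀), hle⟩

theorem HasUnivalentLogs.exists_isNormalizedDiskMap_image_eq (H : HasUnivalentLogs Ω)
    (hΩ : IsOpen Ω) (hconn : IsPreconnected Ω) (hz₀ : z₀ ∈ Ω) (hne : Ω ≠ univ) :
    ∃ f, IsNormalizedDiskMap Ω z₀ f ∧ f '' Ω = ball 0 1 := by
  obtain ⟨f, hf, hmax⟩ := H.exists_isMaxOn_norm_deriv hΩ hconn hz₀ hne
  refine ⟨f, hf, hf.mapsTo.image_subset.antisymm fun c hc => ?_⟩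
  by_contra hcΩ
  obtain ⟨F, hF, hlt⟩ := hf.exists_norm_deriv_lt hΩ hz₀ H (mem_ball_zero_iff.1 hc) hcΩ
  exact hlt.not_ge (hmax hF)

end RiemannMap

/-! ### Domains without holes -/

section HasLogOnCompacts

variable {X : Type*} [TopologicalSpace X] {C D Ω : Set X} {g : X → ℂ}

theorem HasLogOn.sub_eq_sub (h : HasLogOn g (C ∪ D)) (hC : IsPreconnected C)
    (hD : IsPreconnected D) {l L : X → ℂ} (hl : ContinuousOn l C) (hL : ContinuousOn L D)
    (hlexp : ∀ x ∈ C, Complex.exp (l x) = g x) (hLexp : ∀ x ∈ D, Complex.exp (L x) = g x)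
    {x y : X} (hx : x ∈ C ∩ D) (hy : y ∈ C ∩ D) : l x - l y = L x - L y := by
  obtain ⟨M, hM, hMexp⟩ := h
  have hlM := sub_eq_sub_of_exp_eqOn hC hl (hM.mono subset_union_left)
    (fun z hz => (hlexp z hz).trans (hMexp z (.inl hz)).symm) hx.1 hy.1
  have hLM := sub_eq_sub_of_exp_eqOn hD hL (hM.mono subset_union_right)
    (fun z hz => (hLexp z hz).trans (hMexp z (.inr hz)).symm) hx.2 hy.2
  linear_combination hlM - hLM

-- The logarithm is continued from `z₀` to `z` along a path; any two such continuations agree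
-- because the union of the two paths is compact.
theorem hasLogOn_of_forall_isCompact [LocallyPathConnectedSpace X] [LocallyCompactSpace X]
    (hΩ : IsOpen Ω) (hconn : IsPreconnected Ω) (h : ∀ S ⊆ Ω, IsCompact S → HasLogOn g S) :
    HasLogOn g Ω := by
  obtain rfl | ⟨z₀, hz₀⟩ := Ω.eq_empty_or_nonempty
  · exact h ∅ subset_rfl isCompact_empty
  have hpath := hΩ.isConnected_iff_isPathConnected.1 ⟨⟨z₀, hz₀⟩, hconn⟩
  have hC : ∀ z ∈ Ω, ∃ C ⊆ Ω, IsCompact C ∧ IsPreconnected C ∧ z₀ ∈ C ∧ z ∈ C := fun z hz => by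
    obtain ⟨γ, hγ⟩ := hpath.joinedIn z₀ hz₀ z hz
    exact ⟨range γ, range_subset_iff.2 hγ, isCompact_range γ.continuous,
      isPreconnected_range γ.continuous, ⟨0, γ.source⟩, ⟨1, γ.target⟩⟩
  choose! C hCΩ hCcpt hCconn hz₀C hzC using hC
  choose! l hl hexp using fun z hz => h (C z) (hCΩ z hz) (hCcpt z hz)
  have hg0 : g z₀ ≠ 0 := (h {z₀} (singleton_subset_iff.2 hz₀) isCompact_singleton).ne_zero rfl
  refine ⟨fun z => l z z - l z z₀ + Complex.log (g z₀), fun z hz => ?_, fun z hz => ?_⟩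
  · obtain ⟨N, hN, hNΩ, hNcpt⟩ := local_compact_nhds (hΩ.mem_nhds hz)
    obtain ⟨V, hVN, hVo, hzV, hVconn⟩ := locallyConnectedSpace_iff_subsets_isOpen_isConnected.1
      inferInstance z N hN
    have hSΩ : C z ∪ N ⊆ Ω := union_subset (hCΩ z hz) hNΩ
    have hVS : C z ∪ V ⊆ C z ∪ N := union_subset_union_right _ hVN
    obtain ⟨L, hL, hLexp⟩ := h (C z ∪ N) hSΩ ((hCcpt z hz).union hNcpt)
    have heq : EqOn (fun y => l y y - l y z₀ + Complex.log (g z₀))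
        (fun y => L y - L z₀ + Complex.log (g z₀)) V := fun y hyV => by
      have hy := hNΩ (hVN hyV)
      have hunion := (h (C y ∪ (C z ∪ N)) (union_subset (hCΩ y hy) hSΩ)
        ((hCcpt y hy).union ((hCcpt z hz).union hNcpt))).mono (union_subset_union_right _ hVS)
      simp only [hunion.sub_eq_sub (hCconn y hy)
        ((hCconn z hz).union z (hzC z hz) hzV hVconn.isPreconnected) (hl y hy) (hL.mono hVS)
        (hexp y hy) (fun x hx => hLexp x (hVS hx)) ⟨hzC y hy, .inr hyV⟩
        ⟨hz₀C y hy, .inl (hz₀C z hz)⟩]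
    have hLV : ContinuousOn L V := hL.mono (hVN.trans subset_union_right)
    exact ((((hLV.sub continuousOn_const).add_const _).congr heq).continuousAt
      (hVo.mem_nhds hzV)).continuousWithinAt
  · rw [Complex.exp_add, Complex.exp_sub, hexp z hz z (hzC z hz), hexp z hz z₀ (hz₀C z hz),
      Complex.exp_log hg0, div_mul_cancel₀ _ hg0]

end HasLogOnCompacts

section Complements

variable {X : Type*} [TopologicalSpace X] [PreconnectedSpace X] [LocallyConnectedSpace X]
  {K U : Set X}

theorem isPreconnected_compl_of_isPreconnected_sdiff (hK : IsClosed K) (hU : IsOpen U)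
    (hKU : K ⊆ U) (h : IsPreconnected (U \ K)) : IsPreconnected Kᶜ := by
  obtain rfl | ⟨k, hk⟩ := K.eq_empty_or_nonempty
  · simpa using isPreconnected_univ
  have hmeets : ∀ a ∉ K, ∃ w ∈ U \ K, w ∈ connectedComponentIn Kᶜ a := fun a ha => by
    obtain ⟨b, hb⟩ : (frontier (connectedComponentIn Kᶜ a)).Nonempty :=
      nonempty_frontier_iff.2 ⟨⟨a, mem_connectedComponentIn ha⟩, fun huniv =>
        connectedComponentIn_subset Kᶜ a (huniv ▸ mem_univ k) hk⟩
    have hbK := not_notMem.1 (frontier_connectedComponentIn_subset_compl hK.isOpen_compl a hb)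
    obtain ⟨w, hwU, hw⟩ :=
      _root_.mem_closure_iff.1 (frontier_subset_closure hb) U hU (hKU hbK)
    exact ⟨w, ⟨hwU, connectedComponentIn_subset _ _ hw⟩, hw⟩
  refine isPreconnected_of_forall_pair fun a ha b hb => ?_
  obtain ⟨v, hv, hva⟩ := hmeets a ha
  obtain ⟨w, hw, hwb⟩ := hmeets b hb
  have hvw : w ∈ connectedComponentIn Kᶜ v :=
    h.subset_connectedComponentIn hv (fun z hz => hz.2) hw
  have heq : connectedComponentIn Kᶜ b = connectedComponentIn Kᶜ a :=
    ((connectedComponentIn_eq hwb).trans (connectedComponentIn_eq hvw).symm).trans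
      (connectedComponentIn_eq hva).symm
  exact ⟨_, connectedComponentIn_subset Kᶜ a, mem_connectedComponentIn ha,
    heq ▸ mem_connectedComponentIn hb, isPreconnected_connectedComponentIn⟩

end Complements

/-- `Ω` has no holes: it is exhausted by compact sets with connected complement. For bounded `Ω`
this is one of the ways of saying that `Ω` is simply connected. -/
def HasNoHoles {X : Type*} [TopologicalSpace X] (Ω : Set X) : Prop :=
  ∀ S ⊆ Ω, IsCompact S → ∃ C ⊆ Ω, IsCompact C ∧ S ⊆ C ∧ IsPreconnected Cᶜ

theorem HasNoHoles.hasUnivalentLogs {Ω : Set ℂ} (H : HasNoHoles Ω) (hΩ : IsOpen Ω)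
    (hconn : IsPreconnected Ω) : HasUnivalentLogs Ω := by
  intro g hg hg0
  refine hasLogOn_of_forall_isCompact hΩ hconn fun S hSΩ hS => ?_
  obtain ⟨C, hCΩ, hC, hSC, hCc⟩ := H S hSΩ hS
  have hgcont := hg.differentiableOn.continuousOn
  have hgC : IsCompact (g '' C) := hC.image_of_continuousOn (hgcont.mono hCΩ)
  have hdiff : IsPreconnected (g '' Ω \ g '' C) := by
    rw [← hg.injOn.image_sdiff_subset hCΩ, sdiff_eq]
    refine (isPreconnected_inter_of_union_eq_univ hΩ hC.isClosed.isOpen_compl hconn hCc ?_).image g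
      (hgcont.mono inter_subset_left)
    exact univ_subset_iff.1 fun z _ => (em (z ∈ C)).imp (fun h => hCΩ h) id
  have hcompl := isPreconnected_compl_of_isPreconnected_sdiff hgC.isClosed
    (hg.isOpen_image hΩ subset_rfl hΩ) (image_mono hCΩ) hdiff
  have h0 : (0 : ℂ) ∉ g '' C := fun ⟨z, hz, hz0⟩ => hg0 z (hCΩ hz) hz0
  have hlog := (hasLogOn_sub_of_isPreconnected_compl hgC hcompl h0).comp
    (hgcont.mono hCΩ) (mapsTo_image g C)
  exact (hlog.mono hSC).congr fun z _ => sub_zero (g z)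

section InvCompl

variable {K S T : Set ℂ}

/-- The complement of `K` in the Riemann sphere, seen from the chart at infinity `z ↦ z⁻¹`; since
`0⁻¹ = 0`, the point at infinity has to be inserted by hand. -/
def invCompl (K : Set ℂ) : Set ℂ :=
  insert 0 (Inv.inv ⁻¹' Kᶜ)

theorem zero_mem_invCompl : 0 ∈ invCompl K :=
  mem_insert _ _

theorem inv_mem_invCompl {z : ℂ} (hz : z ∉ K) : z⁻¹ ∈ invCompl K :=
  .inr (by simpa using hz)

theorem subset_invCompl_comm : S ⊆ invCompl K ↔ K ⊆ invCompl S := by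
  have h : ∀ {S K : Set ℂ}, S ⊆ invCompl K → K ⊆ invCompl S := fun {S K} h z hz => by
    refine or_iff_not_imp_right.2 fun hzS => ?_
    have hzK := h (not_notMem.1 hzS)
    rw [invCompl, mem_insert_iff, mem_preimage, inv_inv] at hzK
    exact inv_eq_zero.1 (hzK.resolve_right (not_notMem.2 hz))
  exact ⟨h, h⟩

theorem invCompl_anti (h : K ⊆ T) : invCompl T ⊆ invCompl K :=
  insert_subset_insert (preimage_mono (compl_subset_compl.2 h))

theorem compl_invCompl : (invCompl K)ᶜ = {0}ᶜ ∩ Inv.inv ⁻¹' K := by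
  ext z
  simp [invCompl]

theorem compl_invCompl_eq_image : (invCompl K)ᶜ = Inv.inv '' (K ∩ {0}ᶜ) := by
  rw [compl_invCompl, image_inv_eq_inv]
  ext z
  simp [and_comm]

theorem isOpen_invCompl (hK : IsCompact K) : IsOpen (invCompl K) := by
  refine isOpen_iff_mem_nhds.2 fun w hw => ?_
  obtain rfl | hw0 := eq_or_ne w 0
  · exact insert_mem_nhds_iff.2 (tendsto_inv₀_nhdsNE_zero (isBounded_def.1 hK.isBounded))
  · exact mem_of_superset ((continuousAt_inv₀ hw0).preimage_mem_nhds
      (hK.isClosed.isOpen_compl.mem_nhds (hw.resolve_left hw0))) (subset_insert _ _)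

theorem isCompact_invCompl (hT : IsOpen T) (h0 : 0 ∈ T) : IsCompact (invCompl T) := by
  refine Metric.isCompact_of_isClosed_isBounded ?_ ?_
  · rw [← isOpen_compl_iff, compl_invCompl]
    exact (continuousOn_inv₀ : ContinuousOn (Inv.inv : ℂ → ℂ) {0}ᶜ).isOpen_inter_preimage
      isOpen_compl_singleton hT
  · rw [invCompl, isBounded_insert, isBounded_def, preimage_compl, compl_compl]
    exact tendsto_inv₀_cobounded (hT.mem_nhds h0)

theorem isPreconnected_invCompl (hK : IsCompact K) (hKc : IsPreconnected Kᶜ) (h0 : 0 ∈ K) :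
    IsPreconnected (invCompl K) := by
  have hinv : IsPreconnected (Inv.inv ⁻¹' Kᶜ : Set ℂ) := by
    rw [inv_preimage, ← image_inv_eq_inv]
    exact hKc.image _ (continuousOn_inv₀.mono fun z hz h => hz (h ▸ h0))
  refine hinv.subset_closure (subset_insert _ _) (insert_subset ?_ subset_closure)
  exact mem_closure_iff_frequently.2 <| ((tendsto_inv₀_nhdsNE_zero.eventually
    (isBounded_def.1 hK.isBounded)).frequently).filter_mono nhdsWithin_le_nhds

theorem hasNoHoles_invCompl (hK : IsPreconnected K) (h0 : 0 ∈ K) : HasNoHoles (invCompl K) := by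
  intro S hSK hS
  rw [subset_invCompl_comm] at hSK
  set T := connectedComponentIn (invCompl S) 0
  have hKT : K ⊆ T := hK.subset_connectedComponentIn h0 hSK
  have hT : IsOpen T := (isOpen_invCompl hS).connectedComponentIn
  refine ⟨invCompl T, invCompl_anti hKT, isCompact_invCompl hT (hKT h0),
    subset_invCompl_comm.2 (connectedComponentIn_subset _ _), ?_⟩
  rw [compl_invCompl_eq_image]
  refine (isPreconnected_inter_of_union_eq_univ hT isOpen_compl_singleton
    isPreconnected_connectedComponentIn
    (isConnected_compl_singleton_of_one_lt_rank one_lt_rank_complex 0).isPreconnected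
    ?_).image _ (continuousOn_inv₀.mono inter_subset_right)
  exact univ_subset_iff.1 fun z _ => (eq_or_ne z 0).imp (fun h : z = 0 => h ▸ hKT h0) id

end InvCompl

/-! ### The exterior Riemann map -/

section ExteriorMap

variable {K : Set ℂ} {h φ : ℂ → ℂ}

/-- `h` maps the complement of `K` onto the punctured unit disc, sending infinity to the puncture
and `K` to the unit circle, and `φ` is its conformal inverse. -/
structure IsExteriorMap (K : Set ℂ) (h φ : ℂ → ℂ) : Prop where
  continuousOn : ContinuousOn h Kᶜ
  mapsTo : MapsTo h Kᶜ (ball 0 1 \ {0})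
  differentiableOn_symm : DifferentiableOn ℂ φ (ball 0 1 \ {0})
  mapsTo_symm : MapsTo φ (ball 0 1 \ {0}) Kᶜ
  invOn : InvOn φ h Kᶜ (ball 0 1 \ {0})
  tendsto_norm : ∀ k ∈ K, Tendsto (fun z => ‖h z‖) (𝓝[Kᶜ] k) (𝓝 1)
  tendsto_cobounded : Tendsto h (cobounded ℂ) (𝓝 0)

theorem IsNormalizedDiskMap.tendsto_norm_inv {f : ℂ → ℂ} (hf : IsNormalizedDiskMap (invCompl K) 0 f)
    (hK : IsCompact K) (hfK : f '' invCompl K = ball 0 1) (h0 : 0 ∈ K) {k : ℂ} (hk : k ∈ K) :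
    Tendsto (fun z => ‖f z⁻¹‖) (𝓝[Kᶜ] k) (𝓝 1) := by
  refine tendsto_order.2 ⟨fun r hr => ?_, fun r hr => ?_⟩
  · set ψ := Function.invFunOn f (invCompl K)
    have hψ : ContinuousOn ψ (ball 0 1) :=
      hfK ▸ (hf.differentiableOn_invFunOn (isOpen_invCompl hK)).continuousOn
    have hball : closedBall (0 : ℂ) r ⊆ ball 0 1 := closedBall_subset_ball hr
    have hS : IsCompact (ψ '' closedBall 0 r) :=
      (isCompact_closedBall 0 r).image_of_continuousOn (hψ.mono hball)
    have hSK : ψ '' closedBall 0 r ⊆ invCompl K :=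
      ((hfK ▸ surjOn_image f _).mapsTo_invFunOn.mono_left hball).image_subset
    filter_upwards [mem_nhdsWithin_of_mem_nhds
      ((isOpen_invCompl hS).mem_nhds (subset_invCompl_comm.1 hSK hk)), self_mem_nhdsWithin]
      with z hzS hz
    by_contra! hle
    exact hzS.resolve_left (fun hz0 => hz (hz0 ▸ h0)) ⟨f z⁻¹, mem_closedBall_zero_iff.2 hle,
      hf.injOn.leftInvOn_invFunOn (inv_mem_invCompl hz)⟩
  · filter_upwards [self_mem_nhdsWithin] with z hz
    exact (mem_ball_zero_iff.1 (hf.mapsTo (inv_mem_invCompl hz))).trans hr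

theorem IsNormalizedDiskMap.isExteriorMap {f : ℂ → ℂ} (hf : IsNormalizedDiskMap (invCompl K) 0 f)
    (hK : IsCompact K) (hfK : f '' invCompl K = ball 0 1) (h0 : 0 ∈ K) :
    IsExteriorMap K (fun z => f z⁻¹) (fun w => (Function.invFunOn f (invCompl K) w)⁻¹) := by
  set Ω := invCompl K
  set ψ := Function.invFunOn f Ω
  have hΩ : IsOpen Ω := isOpen_invCompl hK
  have hψf : LeftInvOn ψ f Ω := hf.injOn.leftInvOn_invFunOn
  have hfψ : RightInvOn ψ f (ball 0 1) := (hfK ▸ surjOn_image f Ω).rightInvOn_invFunOn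
  have hψ : DifferentiableOn ℂ ψ (ball 0 1) := hfK ▸ hf.differentiableOn_invFunOn hΩ
  have hψΩ : MapsTo ψ (ball 0 1) Ω := (hfK ▸ surjOn_image f Ω).mapsTo_invFunOn
  have hψ0 : ∀ w ∈ ball (0 : ℂ) 1 \ {0}, ψ w ≠ 0 := fun w hw hw0 =>
    hw.2 (by rw [mem_singleton_iff, ← hfψ hw.1, hw0, hf.map_base])
  have hK0 : ∀ z ∈ Kᶜ, z ≠ 0 := fun z hz hz0 => hz (hz0 ▸ h0)
  have hf0 : ContinuousAt f 0 :=
    hf.differentiableOn.continuousOn.continuousAt (hΩ.mem_nhds zero_mem_invCompl)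
  refine ⟨hf.differentiableOn.continuousOn.comp (continuousOn_inv₀.mono hK0)
      fun z => inv_mem_invCompl, fun z hz => ⟨hf.mapsTo (inv_mem_invCompl hz), fun hfz => ?_⟩,
    (hψ.mono sdiff_subset).inv hψ0, fun w hw => (hψΩ hw.1).resolve_left (hψ0 w hw),
    ⟨fun z hz => by simp [hψf (inv_mem_invCompl hz)], fun w hw => by simp [hfψ hw.1]⟩,
    fun k hk => hf.tendsto_norm_inv hK hfK h0 hk,
    (hf.map_base ▸ hf0.tendsto).comp tendsto_inv₀_cobounded⟩
  exact inv_ne_zero (hK0 z hz) <|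
    hf.injOn (inv_mem_invCompl hz) zero_mem_invCompl (hfz.trans hf.map_base.symm)

theorem exists_isExteriorMap_of_zero_mem (hK : IsCompact K) (hKconn : IsPreconnected K)
    (hKc : IsPreconnected Kᶜ) (h0 : 0 ∈ K) (hK' : K.Nontrivial) :
    ∃ h φ, IsExteriorMap K h φ := by
  have hΩ : IsOpen (invCompl K) := isOpen_invCompl hK
  have hΩconn : IsPreconnected (invCompl K) := isPreconnected_invCompl hK hKc h0
  have hΩne : invCompl K ≠ univ := by
    obtain ⟨q, hq, hq0⟩ := hK'.exists_ne 0
    refine (ne_univ_iff_exists_notMem _).2 ⟨q⁻¹, ?_⟩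
    rw [← mem_compl_iff, compl_invCompl_eq_image]
    exact mem_image_of_mem _ ⟨hq, hq0⟩
  obtain ⟨f, hf, hfK⟩ := ((hasNoHoles_invCompl hKconn h0).hasUnivalentLogs hΩ
    hΩconn).exists_isNormalizedDiskMap_image_eq hΩ hΩconn zero_mem_invCompl hΩne
  exact ⟨_, _, hf.isExteriorMap hK hfK h0⟩

theorem IsExteriorMap.translate {p : ℂ} (H : IsExteriorMap ((· + p) ⁻¹' K) h φ) :
    IsExteriorMap K (fun z => h (z - p)) (fun w => φ w + p) := by
  have hsub : MapsTo (· - p) Kᶜ ((· + p) ⁻¹' K)ᶜ := fun z hz => by simpa using hz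
  refine ⟨H.continuousOn.comp (by fun_prop) hsub, H.mapsTo.comp hsub,
    H.differentiableOn_symm.add_const p, H.mapsTo_symm, ⟨fun z hz => ?_, fun w hw => ?_⟩,
    fun k hk => ?_, ?_⟩
  · simp [H.invOn.1 (hsub hz)]
  · simp [H.invOn.2 hw]
  · refine (H.tendsto_norm (k - p) (by simpa using hk)).comp ?_
    exact (continuous_sub_right p).continuousWithinAt.tendsto_nhdsWithin hsub
  · exact H.tendsto_cobounded.comp (tendsto_sub_const_cobounded p)

theorem exists_isExteriorMap (hK : IsCompact K) (hKconn : IsPreconnected K)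
    (hKc : IsPreconnected Kᶜ) (hK' : K.Nontrivial) : ∃ h φ, IsExteriorMap K h φ := by
  obtain ⟨p, hp⟩ := hK'.nonempty
  let e := Homeomorph.addRight p
  obtain ⟨h, φ, H⟩ := exists_isExteriorMap_of_zero_mem (K := e ⁻¹' K)
    (e.isCompact_preimage.2 hK) (e.isPreconnected_preimage.2 hKconn)
    (e.isPreconnected_preimage.2 hKc) (by simpa [e]) (hK'.preimage e.surjective)
  exact ⟨_, _, H.translate⟩

end ExteriorMap

/-! ### The length–area method -/

section LengthArea

open Complex MeasureTheory
open scoped ENNReal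

theorem sq_lintegral_le {α : Type*} [MeasurableSpace α] (μ : Measure α) {f : α → ℝ≥0∞}
    (hf : AEMeasurable f μ) : (∫⁻ x, f x ∂μ) ^ 2 ≤ (∫⁻ x, f x ^ 2 ∂μ) * μ univ := by
  have hsqrt : ∀ a : ℝ≥0∞, (a ^ 2) ^ (1 / 2 : ℝ) = a := fun a => by
    rw [← ENNReal.rpow_natCast_mul, Nat.cast_ofNat, mul_one_div_cancel two_ne_zero,
      ENNReal.rpow_one]
  have hsq : ∀ a : ℝ≥0∞, (a ^ (1 / 2 : ℝ)) ^ 2 = a := fun a => by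
    rw [← ENNReal.rpow_mul_natCast, Nat.cast_ofNat, one_div_mul_cancel two_ne_zero,
      ENNReal.rpow_one]
  have holder := ENNReal.lintegral_mul_norm_pow_le (g := fun _ => 1) (hf.pow_const 2)
    aemeasurable_const one_half_pos.le one_half_pos.le (add_halves (1 : ℝ))
  simp only [hsqrt, ENNReal.one_rpow, mul_one, lintegral_one] at holder
  calc (∫⁻ x, f x ∂μ) ^ 2
      ≤ ((∫⁻ x, f x ^ 2 ∂μ) ^ (1 / 2 : ℝ) * μ univ ^ (1 / 2 : ℝ)) ^ 2 := by gcongr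
    _ = _ := by rw [mul_pow, hsq, hsq]

theorem sq_edist_le_of_hasDerivAt {E : Type*} [NormedAddCommGroup E] [NormedSpace ℝ E]
    [CompleteSpace E] {γ γ' : ℝ → E} {s t : ℝ} (hγ : ∀ x ∈ uIcc s t, HasDerivAt γ (γ' x) x)
    (hγ' : ContinuousOn γ' (uIcc s t)) :
    edist (γ s) (γ t) ^ 2 ≤ (∫⁻ x in uIoc s t, ‖γ' x‖ₑ ^ 2) * ENNReal.ofReal |t - s| := by
  have hγ'int := hγ'.intervalIntegrable (μ := volume)
  have hlength : edist (γ s) (γ t) ≤ ∫⁻ x in uIoc s t, ‖γ' x‖ₑ := by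
    rw [edist_comm, edist_eq_enorm_sub,
      ← intervalIntegral.integral_eq_sub_of_hasDerivAt hγ hγ'int, ← enorm_norm,
      intervalIntegral.norm_intervalIntegral_eq, enorm_norm]
    exact enorm_integral_le_lintegral_enorm _
  calc edist (γ s) (γ t) ^ 2 ≤ (∫⁻ x in uIoc s t, ‖γ' x‖ₑ) ^ 2 := by gcongr
    _ ≤ _ := sq_lintegral_le _ hγ'int.def'.aestronglyMeasurable.enorm
    _ = _ := by rw [Measure.restrict_apply_univ, Real.volume_uIoc]

theorem setLIntegral_reProdIm {f : ℂ → ℝ≥0∞} (hf : Measurable f) (s t : Set ℝ) :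
    ∫⁻ z in s ×ℂ t, f z = ∫⁻ x in s, ∫⁻ y in t, f (x + y * I) := by
  have hpre : measurableEquivRealProd.symm ⁻¹' (s ×ℂ t) = s ×ˢ t := rfl
  rw [← volume_preserving_equiv_real_prod.symm.setLIntegral_comp_preimage_emb
    measurableEquivRealProd.symm.measurableEmbedding, hpre, Measure.volume_eq_prod,
    ← Measure.prod_restrict,
    lintegral_prod (fun p => f (measurableEquivRealProd.symm p))
      (hf.comp measurableEquivRealProd.symm.measurable).aemeasurable]
  simp only [measurableEquivRealProd_symm_apply, mk_eq_add_mul_I]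

variable {f : ℂ → ℂ} {Ω : Set ℂ}

theorem IsUnivalentOn.lintegral_enorm_deriv_sq (hf : IsUnivalentOn f Ω) (hΩ : IsOpen Ω) :
    ∫⁻ z in Ω, ‖deriv f z‖ₑ ^ 2 = volume (f '' Ω) := by
  let f' (z : ℂ) := (ContinuousLinearMap.toSpanSingleton ℂ (deriv f z)).restrictScalars ℝ
  have hdet : ∀ z, ENNReal.ofReal |(f' z).det| = ‖deriv f z‖ₑ ^ 2 := fun z => by
    simp [f', ContinuousLinearMap.det, LinearMap.det_restrictScalars, Algebra.norm_complex_eq,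
      normSq_eq_norm_sq, ENNReal.ofReal_pow]
  simp only [← hdet]
  exact lintegral_abs_det_fderiv_eq_addHaar_image volume hΩ.measurableSet
    (fun z hz => ((hf.differentiableOn.differentiableAt (hΩ.mem_nhds hz)).hasDerivAt.hasFDerivAt
      |>.restrictScalars ℝ).hasFDerivWithinAt) hf.injOn

theorem IsUnivalentOn.exists_sq_edist_le {a b c d : ℝ}
    (hf : IsUnivalentOn f (Ioo a b ×ℂ Ioo c d)) (hab : a < b) :
    ∃ x ∈ Ioo a b, ∀ s ∈ Ioo c d, ∀ t ∈ Ioo c d, edist (f (x + s * I)) (f (x + t * I)) ^ 2 ≤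
      volume (f '' (Ioo a b ×ℂ Ioo c d)) / ENNReal.ofReal (b - a) * ENNReal.ofReal (d - c) := by
  have hΩ : IsOpen (Ioo a b ×ℂ Ioo c d) := isOpen_Ioo.reProdIm isOpen_Ioo
  have hmeas : Measurable fun z => ‖deriv f z‖ₑ ^ 2 := (measurable_deriv f).enorm.pow_const 2
  obtain ⟨x, hx, hslice⟩ := exists_le_setLAverage (μ := volume) (s := Ioo a b)
    (f := fun x => ∫⁻ y in Ioo c d, ‖deriv f (x + y * I)‖ₑ ^ 2) (by simpa using hab) (by simp)
    (Measurable.lintegral_prod_right (by fun_prop)).aemeasurable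
  rw [setLAverage_eq, ← setLIntegral_reProdIm hmeas, hf.lintegral_enorm_deriv_sq hΩ,
    Real.volume_Ioo] at hslice
  have hmem : ∀ y ∈ Ioo c d, (x + y * I : ℂ) ∈ Ioo a b ×ℂ Ioo c d := fun y hy => by
    simpa [mem_reProdIm] using ⟨hx, hy⟩
  refine ⟨x, hx, fun s hs t ht => ?_⟩
  have hst : uIcc s t ⊆ Ioo c d := ordConnected_Ioo.uIcc_subset hs ht
  refine (sq_edist_le_of_hasDerivAt (γ := fun y => f (x + y * I))
    (γ' := fun y => deriv f (x + y * I) * I) (fun y hy => ?_) ?_).trans ?_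
  · have hline : HasDerivAt (fun y : ℝ => (x + y * I : ℂ)) I y := by
      simpa using (ofRealCLM.hasDerivAt.mul_const I).const_add (x : ℂ)
    exact (hf.differentiableOn.differentiableAt
      (hΩ.mem_nhds (hmem y (hst hy)))).hasDerivAt.comp_of_eq y hline rfl
  · exact ((hf.differentiableOn.deriv hΩ).continuousOn.comp (by fun_prop)
      fun y hy => hmem y (hst hy)).mul continuousOn_const
  · have hI : ‖I‖ₑ = 1 := by rw [← enorm_norm, norm_I, enorm_one]
    simp only [enorm_mul, hI, mul_one]
    gcongr
    · exact (lintegral_mono_set (uIoc_subset_uIcc.trans hst)).trans hslice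
    · exact abs_sub_le_of_le_of_le ht.1.le ht.2.le hs.1.le hs.2.le

end LengthArea

/-! ### Boundary behaviour of the exterior map -/

section BoundaryChart

open Complex MeasureTheory

variable {ξ w : ℂ} {ρ : ℝ} {g : ℂ → ℂ}

/-- The open right half of the disc of radius `ρ` about `0`. -/
def halfDisc (ρ : ℝ) : Set ℂ := {w | 0 < w.re ∧ ‖w‖ < ρ}

theorem mapsTo_exp_halfDisc :
    MapsTo exp (Iio 0 ×ℂ Ioo (-(Real.pi / 2)) (Real.pi / 2)) (halfDisc 1) := by
  rintro s ⟨hre, him⟩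
  refine ⟨?_, by rwa [norm_exp, Real.exp_lt_one_iff]⟩
  rw [exp_re]
  exact mul_pos (Real.exp_pos _) (Real.cos_pos_of_mem_Ioo him)

theorem IsUnivalentOn.comp_exp (hg : IsUnivalentOn g (halfDisc 1)) :
    IsUnivalentOn (g ∘ exp) (Iio 0 ×ℂ Ioo (-(Real.pi / 2)) (Real.pi / 2)) := by
  refine ⟨hg.differentiableOn.comp differentiable_exp.differentiableOn mapsTo_exp_halfDisc,
    hg.injOn.comp ?_ mapsTo_exp_halfDisc⟩
  rintro s ⟨-, hs₁, hs₂⟩ t ⟨-, ht₁, ht₂⟩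
  have := Real.pi_pos
  exact exp_inj_of_neg_pi_lt_of_le_pi (by linarith) (by linarith) (by linarith) (by linarith)

theorem IsUnivalentOn.exists_arc_sq_edist_le (hg : IsUnivalentOn g (halfDisc 1)) {A : ℝ}
    (hA : 0 < A) : ∃ ρ ∈ Ioo (Real.exp (-A)) 1, ∀ w w' : ℂ, 0 < w.re → ‖w‖ = ρ →
      0 < w'.re → ‖w'‖ = ρ → edist (g w) (g w') ^ 2 ≤
        volume (g '' halfDisc 1) / ENNReal.ofReal A * ENNReal.ofReal Real.pi := by
  have hsub : Ioo (-A) 0 ×ℂ Ioo (-(Real.pi / 2)) (Real.pi / 2) ⊆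
      Iio 0 ×ℂ Ioo (-(Real.pi / 2)) (Real.pi / 2) := fun s hs => ⟨hs.1.2, hs.2⟩
  obtain ⟨x, hx, hdist⟩ := IsUnivalentOn.exists_sq_edist_le
    ⟨hg.comp_exp.differentiableOn.mono hsub, hg.comp_exp.injOn.mono hsub⟩ (neg_lt_zero.2 hA)
  have hlog : ∀ w : ℂ, 0 < w.re → ‖w‖ = Real.exp x →
      w.arg ∈ Ioo (-(Real.pi / 2)) (Real.pi / 2) ∧ exp (x + w.arg * I) = w := fun w hw hwx => by
    refine ⟨abs_lt.1 (abs_arg_lt_pi_div_two_iff.2 (Or.inl hw)), ?_⟩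
    rw [exp_add, ← ofReal_exp, ← hwx, norm_mul_exp_arg_mul_I]
  refine ⟨Real.exp x, ⟨Real.exp_lt_exp.2 hx.1, Real.exp_lt_one_iff.2 hx.2⟩,
    fun w w' hw hwx hw' hwx' => ?_⟩
  obtain ⟨harg, hexp⟩ := hlog w hw hwx
  obtain ⟨harg', hexp'⟩ := hlog w' hw' hwx'
  have hle := hdist _ harg _ harg'
  rw [Function.comp_apply, Function.comp_apply, hexp, hexp', image_comp, zero_sub, neg_neg,
    sub_neg_eq_add, add_halves] at hle
  refine hle.trans ?_
  gcongr
  exact mapsTo_exp_halfDisc.image_subset.trans' (image_mono hsub)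

/-- Logarithmic coordinates on the punctured unit disc at the boundary point `ξ`: the right
half-plane covers the punctured disc, and `w = 0` corresponds to `ξ`. -/
noncomputable def boundaryChart (ξ w : ℂ) : ℂ := ξ * exp (-w)

theorem norm_boundaryChart (hξ : ‖ξ‖ = 1) (w : ℂ) : ‖boundaryChart ξ w‖ = Real.exp (-w.re) := by
  rw [boundaryChart, norm_mul, hξ, one_mul, norm_exp, neg_re]

theorem boundaryChart_mem_ball_iff (hξ : ‖ξ‖ = 1) : boundaryChart ξ w ∈ ball 0 1 ↔ 0 < w.re := by
  rw [mem_ball_zero_iff, norm_boundaryChart hξ, Real.exp_lt_one_iff, neg_lt_zero]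

theorem boundaryChart_mem (hξ : ‖ξ‖ = 1) (hw : 0 < w.re) :
    boundaryChart ξ w ∈ ball 0 1 \ {0} := by
  refine ⟨(boundaryChart_mem_ball_iff hξ).2 hw, norm_pos_iff.1 ?_⟩
  rw [norm_boundaryChart hξ]
  exact Real.exp_pos _

theorem differentiable_boundaryChart (ξ : ℂ) : Differentiable ℂ (boundaryChart ξ) := by
  unfold boundaryChart
  fun_prop

theorem injOn_boundaryChart (hξ : ξ ≠ 0) : InjOn (boundaryChart ξ) {w | |w.im| < Real.pi} := by
  intro w hw w' hw' heq
  rw [mem_ofPred_eq, abs_lt] at hw hw'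
  exact neg_injective <| exp_inj_of_neg_pi_lt_of_le_pi (by simp [hw.2]) (by simp; linarith)
    (by simp [hw'.2]) (by simp; linarith) (mul_left_cancel₀ hξ heq)

theorem isOpenMap_boundaryChart (hξ : ξ ≠ 0) : IsOpenMap (boundaryChart ξ) :=
  (Homeomorph.mulLeft₀ ξ hξ).isOpenMap.comp (isOpenMap_exp.comp (Homeomorph.neg ℂ).isOpenMap)

theorem subset_boundaryChart_image_of_isPreconnected (hξ : ‖ξ‖ = 1) {T : Set ℂ}
    (hT : IsPreconnected T) (hT1 : T ⊆ ball 0 1)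
    (harc : ∀ w : ℂ, 0 < w.re → ‖w‖ = ρ → boundaryChart ξ w ∉ T)
    (hne : (T ∩ boundaryChart ξ '' halfDisc ρ).Nonempty) :
    T ⊆ boundaryChart ξ '' halfDisc ρ := by
  have hξ0 : ξ ≠ 0 := norm_ne_zero_iff.1 (hξ ▸ one_ne_zero)
  have hopen : IsOpen (halfDisc ρ) :=
    (isOpen_lt continuous_const continuous_re).inter (isOpen_lt continuous_norm continuous_const)
  have hcompact : IsCompact ({w : ℂ | 0 ≤ w.re} ∩ closedBall 0 ρ) :=
    (isCompact_closedBall _ _).inter_left (isClosed_le continuous_const continuous_re)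
  refine hT.subset_of_closure_inter_subset (isOpenMap_boundaryChart hξ0 _ hopen) hne ?_
  rintro ζ ⟨hζ, hζT⟩
  have hsub : halfDisc ρ ⊆ {w : ℂ | 0 ≤ w.re} ∩ closedBall 0 ρ :=
    fun w hw => ⟨hw.1.le, mem_closedBall_zero_iff.2 hw.2.le⟩
  obtain ⟨w, ⟨-, hwρ⟩, rfl⟩ := closure_minimal (image_mono hsub)
    (hcompact.image (differentiable_boundaryChart ξ).continuous).isClosed hζ
  have hre := (boundaryChart_mem_ball_iff hξ).1 (hT1 hζT)
  exact mem_image_of_mem _ ⟨hre, (mem_closedBall_zero_iff.1 hwρ).lt_of_ne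
    fun hw => harc w hre hw hζT⟩

end BoundaryChart

section Caratheodory

open Complex MeasureTheory

variable {K : Set ℂ} {h φ : ℂ → ℂ}

theorem IsExteriorMap.isBounded_setOf_le_norm (H : IsExteriorMap K h φ) {r : ℝ} (hr : 0 < r) :
    IsBounded {z | r ≤ ‖h z‖} := by
  refine isBounded_def.2 ?_
  filter_upwards [H.tendsto_cobounded (ball_mem_nhds 0 hr)] with z hz
  simpa using hz

theorem IsExteriorMap.exists_mapClusterPt (H : IsExteriorMap K h φ) (hK : IsClosed K)
    {ι : Type*} {F : Filter ι} [F.NeBot] {u : ι → ℂ} (hu : ∀ᶠ i in F, u i ∈ ball 0 1 \ {0})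
    (hu1 : Tendsto (fun i => ‖u i‖) F (𝓝 1)) : ∃ e ∈ K, MapClusterPt e F (φ ∘ u) := by
  have hbdd : ∀ᶠ i in F, φ (u i) ∈ closure {z | 1 / 2 ≤ ‖h z‖} := by
    filter_upwards [hu, hu1 (Ici_mem_nhds one_half_lt_one)] with i hi hi1
    exact subset_closure (by rwa [mem_ofPred_eq, H.invOn.2 hi])
  obtain ⟨e, -, he⟩ :=
    (H.isBounded_setOf_le_norm one_half_pos).isCompact_closure.exists_mapClusterPt
      (tendsto_principal.2 hbdd)
  refine ⟨e, by_contra fun heK => ?_, he⟩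
  have hcont : ContinuousAt (fun z => ‖h z‖) e :=
    (H.continuousOn.continuousAt (hK.isOpen_compl.mem_nhds heK)).norm
  have hlim : Tendsto (fun i => ‖h (φ (u i))‖) F (𝓝 1) :=
    hu1.congr' (hu.mono fun i hi => congrArg norm (H.invOn.2 hi).symm)
  have hnorm : ‖h e‖ = 1 := eq_of_nhds_neBot ((he.continuousAt_comp hcont).clusterPt.mono hlim)
  exact (mem_ball_zero_iff.1 (H.mapsTo heK).1).ne hnorm

theorem IsExteriorMap.isUnivalentOn_halfDisc (H : IsExteriorMap K h φ) {ξ : ℂ} (hξ : ‖ξ‖ = 1) :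
    IsUnivalentOn (φ ∘ boundaryChart ξ) (halfDisc 1) := by
  have hball : MapsTo (boundaryChart ξ) (halfDisc 1) (ball 0 1 \ {0}) :=
    fun w hw => boundaryChart_mem hξ hw.1
  have him : halfDisc 1 ⊆ {w | |w.im| < Real.pi} := fun w hw =>
    (abs_im_le_norm w).trans_lt (hw.2.trans (by linarith [Real.pi_gt_three]))
  exact ⟨H.differentiableOn_symm.comp (differentiable_boundaryChart ξ).differentiableOn hball,
    H.invOn.2.injOn.comp
      ((injOn_boundaryChart (norm_ne_zero_iff.1 (hξ ▸ one_ne_zero))).mono him) hball⟩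

theorem IsExteriorMap.exp_neg_le_norm (H : IsExteriorMap K h φ) {ξ w : ℂ} (hξ : ‖ξ‖ = 1) {ρ : ℝ}
    (hw : w ∈ halfDisc ρ) : Real.exp (-ρ) ≤ ‖h (φ (boundaryChart ξ w))‖ := by
  rw [H.invOn.2 (boundaryChart_mem hξ hw.1), norm_boundaryChart hξ, Real.exp_le_exp]
  exact neg_le_neg ((re_le_norm w).trans hw.2.le)

theorem IsExteriorMap.exists_dist_boundaryChart_le (H : IsExteriorMap K h φ) {ε : ℝ}
    (hε : 0 < ε) : ∃ ρ₀ ∈ Ioo (0 : ℝ) 1, ∀ ξ : ℂ, ‖ξ‖ = 1 → ∃ ρ ∈ Ioo ρ₀ 1, ∀ w w' : ℂ,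
      0 < w.re → ‖w‖ = ρ → 0 < w'.re → ‖w'‖ = ρ →
        dist (φ (boundaryChart ξ w)) (φ (boundaryChart ξ w')) ≤ ε := by
  set B : Set ℂ := {z | Real.exp (-1) ≤ ‖h z‖}
  have hB : volume B ≠ ⊤ := (H.isBounded_setOf_le_norm (Real.exp_pos _)).measure_lt_top.ne
  set A := (volume B).toReal * Real.pi / ε ^ 2 + 1
  have hA : 0 < A := by positivity
  refine ⟨Real.exp (-A), ⟨Real.exp_pos _, Real.exp_lt_one_iff.2 (neg_lt_zero.2 hA)⟩,
    fun ξ hξ => ?_⟩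
  have harea : φ ∘ boundaryChart ξ '' halfDisc 1 ⊆ B := by
    rintro _ ⟨w, hw, rfl⟩
    exact H.exp_neg_le_norm hξ hw
  obtain ⟨ρ, hρ, harc⟩ := (H.isUnivalentOn_halfDisc hξ).exists_arc_sq_edist_le hA
  refine ⟨ρ, hρ, fun w w' hw hwρ hw' hwρ' => ?_⟩
  have hsq := calc
    edist (φ (boundaryChart ξ w)) (φ (boundaryChart ξ w')) ^ 2
      ≤ volume (φ ∘ boundaryChart ξ '' halfDisc 1) / ENNReal.ofReal A * ENNReal.ofReal Real.pi :=
        harc w w' hw hwρ hw' hwρ'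
    _ ≤ ENNReal.ofReal (volume B).toReal / ENNReal.ofReal A * ENNReal.ofReal Real.pi := by
        rw [ENNReal.ofReal_toReal hB]
        gcongr
    _ = ENNReal.ofReal ((volume B).toReal / A * Real.pi) := by
        rw [← ENNReal.ofReal_div_of_pos hA, ← ENNReal.ofReal_mul (by positivity)]
    _ ≤ ENNReal.ofReal (ε ^ 2) := by
        gcongr
        rw [div_mul_eq_mul_div, div_le_iff₀ hA, mul_add, mul_div_cancel₀ _ (by positivity)]
        exact le_add_of_nonneg_right (by positivity)
  rw [edist_dist, ← ENNReal.ofReal_pow dist_nonneg, ENNReal.ofReal_le_ofReal_iff (sq_nonneg ε),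
    sq_le_sq₀ dist_nonneg hε.le] at hsq
  exact hsq

theorem IsExteriorMap.exists_crosscut (H : IsExteriorMap K h φ) (hK : IsClosed K) {ε : ℝ}
    (hε : 0 < ε) : ∃ ρ₀ ∈ Ioo (0 : ℝ) 1, ∀ ξ : ℂ, ‖ξ‖ = 1 → ∃ ρ ∈ Ioo ρ₀ 1, ∃ e ∈ K, ∀ w : ℂ,
      0 < w.re → ‖w‖ = ρ → dist (φ (boundaryChart ξ w)) e ≤ ε := by
  obtain ⟨ρ₀, hρ₀, hshort⟩ := H.exists_dist_boundaryChart_le hε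
  refine ⟨ρ₀, hρ₀, fun ξ hξ => ?_⟩
  obtain ⟨ρ, hρ, harc⟩ := hshort ξ hξ
  have hρ0 : 0 < ρ := hρ₀.1.trans hρ.1
  have hre : ∀ θ, (circleMap 0 ρ θ).re = ρ * Real.cos θ := fun θ => by simp [circleMap_zero]
  have hpos : ∀ᶠ θ in 𝓝[<] (Real.pi / 2), 0 < (circleMap 0 ρ θ).re := by
    filter_upwards [Ioo_mem_nhdsLT (neg_lt_self Real.pi_div_two_pos)] with θ hθ
    rw [hre]
    exact mul_pos hρ0 (Real.cos_pos_of_mem_Ioo hθ)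
  have hnorm : Tendsto (fun θ => ‖boundaryChart ξ (circleMap 0 ρ θ)‖) (𝓝[<] (Real.pi / 2))
      (𝓝 1) := by
    simp only [norm_boundaryChart hξ, hre]
    exact tendsto_nhdsWithin_of_tendsto_nhds (Continuous.tendsto' (by fun_prop) _ _ (by simp))
  obtain ⟨e, heK, he⟩ := H.exists_mapClusterPt hK (hpos.mono fun θ => boundaryChart_mem hξ) hnorm
  refine ⟨ρ, hρ, e, heK, fun w hw hwρ => ?_⟩
  rw [dist_comm, ← mem_closedBall]
  exact isClosed_closedBall.mem_of_mapClusterPt he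
    (hpos.mono fun θ hθ => harc _ w hθ (by simp [abs_of_pos hρ0]) hw hwρ)

theorem IsExteriorMap.isBounded_connectedComponentIn (H : IsExteriorMap K h φ) {L : Set ℂ}
    (hKL : K ⊆ L) {ξ w : ℂ} (hξ : ‖ξ‖ = 1) {ρ : ℝ} (hw : w ∈ halfDisc ρ)
    (harc : ∀ v : ℂ, 0 < v.re → ‖v‖ = ρ → φ (boundaryChart ξ v) ∈ L) :
    IsBounded (connectedComponentIn Lᶜ (φ (boundaryChart ξ w))) := by
  set a := φ (boundaryChart ξ w)
  set W := connectedComponentIn Lᶜ a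
  by_cases haL : a ∈ Lᶜ
  swap
  · rw [show W = ∅ from connectedComponentIn_eq_empty haL]
    exact isBounded_empty
  have hWL : W ⊆ Lᶜ := connectedComponentIn_subset _ _
  have hWK : W ⊆ Kᶜ := hWL.trans (compl_subset_compl.2 hKL)
  have htrap : h '' W ⊆ boundaryChart ξ '' halfDisc ρ := by
    refine subset_boundaryChart_image_of_isPreconnected hξ
      (isPreconnected_connectedComponentIn.image h (H.continuousOn.mono hWK))
      (image_subset_iff.2 fun z hz => (H.mapsTo (hWK hz)).1) ?_
      ⟨h a, mem_image_of_mem h (mem_connectedComponentIn haL), w, hw,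
        (H.invOn.2 (boundaryChart_mem hξ hw.1)).symm⟩
    rintro v hv hvρ ⟨z, hz, hzv⟩
    refine hWL hz ?_
    rw [← H.invOn.1 (hWK hz), hzv]
    exact harc v hv hvρ
  refine (H.isBounded_setOf_le_norm (Real.exp_pos (-ρ))).subset fun z hz => ?_
  obtain ⟨v, hv, hvz⟩ := htrap (mem_image_of_mem h hz)
  have hle := H.exp_neg_le_norm hξ hv
  rwa [hvz, H.invOn.1 (hWK hz)] at hle

theorem HasNoPockets.exists_dist_radius_le (hnp : HasNoPockets K) (H : IsExteriorMap K h φ)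
    (hK : IsClosed K) {ε : ℝ} (hε : 0 < ε) : ∃ r < (1 : ℝ), ∀ ξ : ℂ, ‖ξ‖ = 1 → ∃ e ∈ K,
      ∀ t ∈ Ioo r 1, dist (φ (t * ξ)) e ≤ ε := by
  obtain ⟨δ, hδ, hpocket⟩ := hnp ε hε
  obtain ⟨ρ₀, hρ₀, hcross⟩ := H.exists_crosscut hK hδ
  refine ⟨Real.exp (-ρ₀), Real.exp_lt_one_iff.2 (neg_lt_zero.2 hρ₀.1), fun ξ hξ => ?_⟩
  obtain ⟨ρ, hρ, e, heK, harc⟩ := hcross ξ hξ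
  refine ⟨e, heK, fun t ht => ?_⟩
  have ht0 : 0 < t := (Real.exp_pos _).trans ht.1
  have hlog0 := Real.log_neg ht0 ht.2
  have hlogρ : -Real.log t < ρ := by linarith [(Real.lt_log_iff_exp_lt ht0).2 ht.1, hρ.1]
  have hw : ((-Real.log t : ℝ) : ℂ) ∈ halfDisc ρ :=
    ⟨neg_pos.2 hlog0, by rwa [norm_real, Real.norm_of_nonneg (neg_pos.2 hlog0).le]⟩
  have hchart : boundaryChart ξ (-Real.log t : ℝ) = t * ξ := by
    rw [boundaryChart, ← ofReal_neg, neg_neg, ← ofReal_exp, Real.exp_log ht0, mul_comm]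
  rw [← hchart]
  by_contra! hfar
  exact hpocket e heK _ (H.mapsTo_symm (boundaryChart_mem hξ hw.1)) hfar <|
    H.isBounded_connectedComponentIn subset_union_left hξ hw
      fun v hv hvρ => Or.inr (harc v hv hvρ)

end Caratheodory

/-! ### The retraction -/

section RadialPush

variable {K : Set ℂ} {h φ : ℂ → ℂ} {s : ℝ} {z : ℂ}

open Classical in
/-- Fixes `K` and, in the coordinates of the exterior map, pushes the points of its complement
radially outwards to norm at least `s`. As `s → 1` these maps converge to a retraction onto `K`. -/
noncomputable def radialPush (K : Set ℂ) (h φ : ℂ → ℂ) (s : ℝ) (z : ℂ) : ℂ :=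
  if z ∈ K then z else φ ((max s ‖h z‖ : ℝ) * (h z / ‖h z‖))

theorem radialPush_of_mem (hz : z ∈ K) : radialPush K h φ s z = z := if_pos hz

theorem radialPush_of_notMem (hz : z ∉ K) :
    radialPush K h φ s z = φ ((max s ‖h z‖ : ℝ) * (h z / ‖h z‖)) := if_neg hz

theorem IsExteriorMap.radialPush_of_le_norm (H : IsExteriorMap K h φ) (hz : z ∉ K)
    (hs : s ≤ ‖h z‖) : radialPush K h φ s z = z := by
  have hhz : (‖h z‖ : ℂ) ≠ 0 := by simpa using (H.mapsTo hz).2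
  rw [radialPush_of_notMem hz, max_eq_right hs, mul_div_cancel₀ _ hhz, H.invOn.1 hz]

theorem IsExteriorMap.norm_div_norm (H : IsExteriorMap K h φ) (hz : z ∉ K) :
    ‖h z / ‖h z‖‖ = 1 := by
  simpa using div_self (norm_ne_zero_iff.2 (H.mapsTo hz).2)

theorem IsExteriorMap.max_norm_lt_one (H : IsExteriorMap K h φ) (hz : z ∉ K) (hs : s < 1) :
    max s ‖h z‖ < 1 :=
  max_lt hs (mem_ball_zero_iff.1 (H.mapsTo hz).1)

theorem IsExteriorMap.continuous_radialPush (H : IsExteriorMap K h φ) (hK : IsClosed K)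
    (hs : s ∈ Ioo 0 1) : Continuous (radialPush K h φ s) := by
  refine continuous_iff_continuousAt.2 fun k => ?_
  by_cases hk : k ∈ K
  · refine continuousAt_id.congr ?_
    have hnear : ∀ᶠ z in 𝓝 k, z ∈ Kᶜ → s < ‖h z‖ :=
      eventually_nhdsWithin_iff.1 ((H.tendsto_norm k hk).eventually (lt_mem_nhds hs.2))
    filter_upwards [hnear] with z hz
    by_cases hzK : z ∈ K
    · exact (radialPush_of_mem hzK).symm
    · exact (H.radialPush_of_le_norm hzK (hz hzK).le).symm
  · have hcont : ContinuousOn (fun z => φ ((max s ‖h z‖ : ℝ) * (h z / ‖h z‖))) Kᶜ := by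
      have hn := H.continuousOn.norm
      refine H.differentiableOn_symm.continuousOn.comp
        ((Complex.continuous_ofReal.comp_continuousOn (ContinuousOn.sup continuousOn_const hn)).mul
          (H.continuousOn.div (Complex.continuous_ofReal.comp_continuousOn hn) fun z hz => ?_))
        fun z hz => ?_
      · simpa using (H.mapsTo hz).2
      · have hpos : 0 < max s ‖h z‖ := hs.1.trans_le (le_max_left _ _)
        have hnorm : ‖(max s ‖h z‖ : ℝ) * (h z / ‖h z‖)‖ = max s ‖h z‖ := by
          rw [norm_mul, H.norm_div_norm hz, mul_one, Complex.norm_of_nonneg hpos.le]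
        exact ⟨mem_ball_zero_iff.2 (hnorm.trans_lt (H.max_norm_lt_one hz hs.2)),
          norm_pos_iff.1 (hpos.trans_eq hnorm.symm)⟩
    exact (hcont.congr fun z hz => radialPush_of_notMem hz).continuousAt
      (hK.isOpen_compl.mem_nhds hk)

theorem HasNoPockets.exists_dist_radialPush_le (hnp : HasNoPockets K) (H : IsExteriorMap K h φ)
    (hK : IsClosed K) {ε : ℝ} (hε : 0 < ε) :
    ∃ r < (1 : ℝ), ∀ z, ∃ e ∈ K, ∀ s ∈ Ioo r 1, dist (radialPush K h φ s z) e ≤ ε := by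
  obtain ⟨r, hr, hradius⟩ := hnp.exists_dist_radius_le H hK hε
  refine ⟨r, hr, fun z => ?_⟩
  by_cases hz : z ∈ K
  · exact ⟨z, hz, fun s _ => by rw [radialPush_of_mem hz, dist_self]; exact hε.le⟩
  · obtain ⟨e, heK, he⟩ := hradius _ (H.norm_div_norm hz)
    refine ⟨e, heK, fun s hs => ?_⟩
    rw [radialPush_of_notMem hz]
    exact he _ ⟨hs.1.trans_le (le_max_left _ _), H.max_norm_lt_one hz hs.2⟩

end RadialPush

section PlaneRetract

variable {K X Y : Set ℂ}

theorem HasNoPockets.isRetract (hnp : HasNoPockets K) (hK : IsCompact K)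
    (hKconn : IsPreconnected K) (hne : K.Nonempty) : IsRetract K := by
  obtain hsub | hK' := K.subsingleton_or_nontrivial
  · obtain ⟨p, hp⟩ := hne
    exact ⟨fun _ => p, continuous_const, fun _ => hp, fun z hz => hsub hp hz⟩
  obtain ⟨h, φ, H⟩ := exists_isExteriorMap hK hKconn
    (hnp.isPreconnected_compl one_lt_rank_complex hK.isBounded hne) hK'
  refine isRetract_of_forall_exists_dist_le hK.isClosed (l := 𝓝[<] 1) (F := radialPush K h φ) ?_
    (fun s z hz => radialPush_of_mem hz) fun ε hε => ?_
  · filter_upwards [Ioo_mem_nhdsLT one_pos] with s hs using H.continuous_radialPush hK.isClosed hs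
  · obtain ⟨r, hr, happ⟩ := hnp.exists_dist_radialPush_le H hK.isClosed hε
    exact ⟨Ioo r 1, Ioo_mem_nhdsLT hr, happ⟩

theorem IsRetract.connectedComponentIn_inter (hX : IsRetract X) (hY : IsRetract Y)
    (hXc : IsCompact X) (hYc : IsCompact Y) {x : ℂ} (hx : x ∈ X ∩ Y) :
    IsRetract (connectedComponentIn (X ∩ Y) x) := by
  have hXY : IsCompact (X ∩ Y) := hXc.inter hYc
  refine HasNoPockets.isRetract ?_ ?_ isPreconnected_connectedComponentIn
    ⟨x, mem_connectedComponentIn hx⟩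
  · exact (hX.hasNoPockets hXc).connectedComponentIn_inter one_lt_rank_complex
      (hY.hasNoPockets hYc) hXY.isClosed hXY.isBounded x
  · exact hXY.of_isClosed_subset (isClosed_connectedComponentIn hXY.isClosed x)
      (connectedComponentIn_subset _ _)

end PlaneRetract

end PlaneAR

open PlaneAR Set

/-- If `X` and `Y` are compact absolute retracts in the plane, then every connected
component of `X ∩ Y` is a compact absolute retract. -/
theorem component_of_inter_of_ARs_is_AR
    (X Y : Set (EuclideanSpace ℝ (Fin 2)))
    (hX : IsCompact X) (hY : IsCompact Y)
    (hXAR : IsAbsoluteRetract X) (hYAR : IsAbsoluteRetract Y) :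
    ∀ x ∈ X ∩ Y,
      IsCompact (connectedComponentIn (X ∩ Y) x) ∧
        IsAbsoluteRetract ↥(connectedComponentIn (X ∩ Y) x) := by
  intro x hx
  let e : EuclideanSpace ℝ (Fin 2) ≃ₜ ℂ := Complex.orthonormalBasisOneI.repr.toHomeomorph.symm
  have hXY : IsCompact (X ∩ Y) := hX.inter hY
  have himage : e '' connectedComponentIn (X ∩ Y) x =
      connectedComponentIn (e '' X ∩ e '' Y) (e x) := by
    rw [e.image_connectedComponentIn hx, image_inter e.injective]
  have hretract : IsRetract (e '' connectedComponentIn (X ∩ Y) x) := himage ▸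
    ((hXAR.isRetract hX.isClosed).image e).connectedComponentIn_inter
      ((hYAR.isRetract hY.isClosed).image e) (hX.image e.continuous) (hY.image e.continuous)
      ⟨mem_image_of_mem e hx.1, mem_image_of_mem e hx.2⟩
  refine ⟨hXY.of_isClosed_subset (isClosed_connectedComponentIn hXY.isClosed x)
    (connectedComponentIn_subset _ _), ?_⟩
  have hback : IsRetract (connectedComponentIn (X ∩ Y) x) := by
    simpa [image_image] using hretract.image e.symm
  exact hback.isAbsoluteRetract ⟨x, mem_connectedComponentIn hx⟩
end

section
/- Let X and Y be locally connected continua in the plane ℝ² (nonempty compact connected locally connected subsets of ℝ²) such that ℝ² \ X and ℝ² \ Y are both connected. Then every connected component of X ∩ Y is locally connected. -/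
/-!
Let `Z = X ∩ Y`. If the component of `p` in `Z` is not locally connected at `p`, then inside some
closed disc around `p` there are pieces of `Z`, lying in disjoint compact sets `P` and `Q`, which
run from points `q₁, q₂` close to `p` to points `y₁, y₂` close to a point `y₀ ≠ p`. Take a circle
separating `p` from `y₀`. For `a` on the circle but not on `P`, the increment of a branch of
`log (z - a)` along the first piece gives a logarithm of `(y₁ - a) / (q₁ - a)`; for `a` not on `Q`
so does the increment along the detour `q₁ → q₂ → y₂ → y₁` through the second piece. If `a` is on
neither, it lies outside `X` or outside `Y`, say outside `X`. As `X` does not separate the plane,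
`log (z - a)` has a branch on `X`, and as `X` is locally connected, the short steps `q₁ → q₂` and
`y₂ → y₁` can be made inside `X`, so the two increments agree. They paste to a continuous logarithm
of `(y₁ - a) / (q₁ - a)` on a circle around `q₁` but not `y₁`, which is impossible.
-/

open Set Topology Filter Metric

section Components

variable {α : Type*} [TopologicalSpace α]

lemma mem_connectedComponentIn_symm {F : Set α} {x y : α} (h : y ∈ connectedComponentIn F x) :
    x ∈ connectedComponentIn F y :=
  connectedComponentIn_eq h ▸
    mem_connectedComponentIn (connectedComponentIn_nonempty_iff.1 ⟨y, h⟩)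

lemma connectedComponentIn_union_of_mem_left {F G : Set α} (hF : IsClosed F) (hG : IsClosed G)
    (hFG : Disjoint F G) {x : α} (hx : x ∈ F) :
    connectedComponentIn (F ∪ G) x = connectedComponentIn F x := by
  have hx' : x ∈ connectedComponentIn (F ∪ G) x := mem_connectedComponentIn (Or.inl hx)
  refine (connectedComponentIn_mono x subset_union_left).antisymm' ?_
  refine isPreconnected_connectedComponentIn.subset_connectedComponentIn hx' ?_
  refine (isPreconnected_iff_subset_of_disjoint_closed.1 isPreconnected_connectedComponentIn F G
    hF hG (connectedComponentIn_subset _ _) (by simp [hFG.inter_eq])).resolve_right fun h => ?_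
  exact hFG.notMem_of_mem_left hx (h hx')

lemma exists_isClopen_of_connectedComponent_subset [T2Space α] [CompactSpace α] {U : Set α}
    (hU : IsOpen U) {x : α} (h : connectedComponent x ⊆ U) :
    ∃ V : Set α, IsClopen V ∧ x ∈ V ∧ V ⊆ U := by
  rw [connectedComponent_eq_iInter_isClopen] at h
  have : Nonempty {s : Set α // IsClopen s ∧ x ∈ s} := ⟨⟨univ, isClopen_univ, trivial⟩⟩
  obtain ⟨⟨V, hV, hxV⟩, hVU⟩ := exists_subset_nhds_of_compactSpace
    (V := fun s : {s : Set α // IsClopen s ∧ x ∈ s} => (s : Set α))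
    (fun s t => ⟨⟨s ∩ t, s.2.1.inter t.2.1, s.2.2, t.2.2⟩, inter_subset_left, inter_subset_right⟩)
    (fun s => s.2.1.isClosed) fun y hy => hU.mem_nhds (h hy)
  exact ⟨V, hV, hxV, hVU⟩

lemma exists_isCompact_partition_of_connectedComponentIn_subset [T2Space α] {T U : Set α}
    (hT : IsCompact T) (hU : IsOpen U) {x : α} (hx : x ∈ T) (h : connectedComponentIn T x ⊆ U) :
    ∃ F G : Set α, IsCompact F ∧ IsCompact G ∧ Disjoint F G ∧ F ∪ G = T ∧ x ∈ F ∧ F ⊆ U := by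
  have : CompactSpace T := isCompact_iff_compactSpace.1 hT
  rw [connectedComponentIn_eq_image hx, image_subset_iff] at h
  obtain ⟨V, hV, hxV, hVU⟩ :=
    exists_isClopen_of_connectedComponent_subset (hU.preimage continuous_subtype_val) h
  refine ⟨(↑) '' V, (↑) '' Vᶜ, hV.isClosed.isCompact.image continuous_subtype_val,
    hV.compl.isClosed.isCompact.image continuous_subtype_val,
    (disjoint_image_iff Subtype.val_injective).2 disjoint_compl_right, ?_, ⟨_, hxV, rfl⟩,
    image_subset_iff.2 hVU⟩
  rw [← image_union, union_compl_self, image_univ, Subtype.range_coe]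

/-- Boundary bumping: if the component of `q` in `Z ∩ B` stayed inside `U`, a clopen piece of
`Z ∩ B` inside `U` would contain it and be clopen in `Z` as well. -/
lemma exists_mem_connectedComponentIn_inter_sdiff [T2Space α] {Z B U : Set α} (hZ : IsCompact Z)
    (hB : IsClosed B) (hU : IsOpen U) (hUB : U ⊆ B) {p q : α} (hqB : q ∈ B)
    (hp : p ∈ connectedComponentIn Z q) (hp' : p ∉ connectedComponentIn (Z ∩ B) q) :
    ∃ y ∈ Z \ U, y ∈ connectedComponentIn (Z ∩ B) q := by
  have hqZ : q ∈ Z := connectedComponentIn_nonempty_iff.1 ⟨p, hp⟩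
  by_contra! hout
  have hsub : connectedComponentIn (Z ∩ B) q ⊆ U := fun z hz => by
    by_contra hzU
    exact hout z ⟨(connectedComponentIn_subset _ _ hz).1, hzU⟩ hz
  obtain ⟨F, G, hF, hG, hFG, hFGT, hqF, hFU⟩ :=
    exists_isCompact_partition_of_connectedComponentIn_subset (hZ.inter_right hB) hU ⟨hqZ, hqB⟩ hsub
  have hsplit : F ∪ (G ∪ Z \ U) = Z := by
    rw [← union_assoc, hFGT]
    refine (union_subset inter_subset_left sdiff_subset).antisymm fun z hz => ?_
    by_cases hzU : z ∈ U
    · exact Or.inl ⟨hz, hUB hzU⟩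
    · exact Or.inr ⟨hz, hzU⟩
  have hdisj : Disjoint F (G ∪ Z \ U) :=
    disjoint_union_right.2 ⟨hFG, disjoint_sdiff_right.mono_left hFU⟩
  rw [← hsplit, connectedComponentIn_union_of_mem_left hF.isClosed
    (hG.isClosed.union (hZ.isClosed.sdiff hU)) hdisj hqF] at hp
  exact hp' (connectedComponentIn_mono q (hFGT ▸ subset_union_left) hp)

lemma exists_isCompact_partition_of_frequently_notMem_connectedComponentIn [T2Space α]
    {T N M : Set α} (hT : IsCompact T) {p : α}
    (h : ∃ᶠ q in 𝓝 p, q ∈ N ∧ p ∉ connectedComponentIn T q ∧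
      ∃ y ∈ M, y ∈ connectedComponentIn T q) :
    ∃ P Q : Set α, IsCompact P ∧ IsCompact Q ∧ Disjoint P Q ∧ P ∪ Q = T ∧
      (∃ q₁ ∈ N, ∃ y₁ ∈ M, y₁ ∈ connectedComponentIn P q₁) ∧
      ∃ q₂ ∈ N, ∃ y₂ ∈ M, y₂ ∈ connectedComponentIn Q q₂ := by
  obtain ⟨q₁, hq₁N, hpq₁, y₁, hy₁M, hy₁⟩ := h.exists
  have hq₁T : q₁ ∈ T := connectedComponentIn_nonempty_iff.1 ⟨y₁, hy₁⟩
  obtain ⟨P, Q, hP, hQ, hPQ, hPQT, hq₁P, hpP⟩ :=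
    exists_isCompact_partition_of_connectedComponentIn_subset hT isOpen_compl_singleton hq₁T
      (subset_compl_singleton_iff.2 hpq₁)
  have havoid : ∀ᶠ q in 𝓝 p, q ∉ P :=
    hP.isClosed.isOpen_compl.mem_nhds (subset_compl_singleton_iff.1 hpP)
  obtain ⟨q₂, ⟨hq₂N, -, y₂, hy₂M, hy₂⟩, hq₂P⟩ := (h.and_eventually havoid).exists
  have hq₂T : q₂ ∈ T := connectedComponentIn_nonempty_iff.1 ⟨y₂, hy₂⟩
  have hq₂Q : q₂ ∈ Q := (hPQT.symm ▸ hq₂T : q₂ ∈ P ∪ Q).resolve_left hq₂P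
  rw [← hPQT, connectedComponentIn_union_of_mem_left hP.isClosed hQ.isClosed hPQ hq₁P] at hy₁
  rw [← hPQT, union_comm,
    connectedComponentIn_union_of_mem_left hQ.isClosed hP.isClosed hPQ.symm hq₂Q] at hy₂
  exact ⟨P, Q, hP, hQ, hPQ, hPQT, ⟨q₁, hq₁N, y₁, hy₁M, hy₁⟩, q₂, hq₂N, y₂, hy₂M, hy₂⟩

/-- A compact form of the existence of convergence continua: the pieces run between points close
to `p` and points close to `y₀`. -/
lemma exists_isCompact_partition_of_connectedComponentIn_notMem_nhdsWithin [T2Space α]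
    {Z B U : Set α} (hZ : IsCompact Z) (hB : IsClosed B) (hU : IsOpen U) (hUB : U ⊆ B) {p : α}
    (hpU : p ∈ U) (hp : connectedComponentIn (Z ∩ B) p ∉ 𝓝[connectedComponentIn Z p] p) :
    ∃ y₀ ∈ Z \ U, ∀ N ∈ 𝓝[Z] p, ∀ M ∈ 𝓝[Z] y₀, ∃ P Q : Set α,
      IsCompact P ∧ IsCompact Q ∧ Disjoint P Q ∧ P ∪ Q = Z ∩ B ∧
      (∃ q₁ ∈ N, ∃ y₁ ∈ M, y₁ ∈ connectedComponentIn P q₁) ∧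
      ∃ q₂ ∈ N, ∃ y₂ ∈ M, y₂ ∈ connectedComponentIn Q q₂ := by
  have hfar : ∃ᶠ q in 𝓝[connectedComponentIn Z p] p, ∃ y ∈ Z \ U,
      p ∉ connectedComponentIn (Z ∩ B) q ∧ y ∈ connectedComponentIn (Z ∩ B) q := by
    have hfreq : ∃ᶠ q in 𝓝[connectedComponentIn Z p] p, q ∉ connectedComponentIn (Z ∩ B) p :=
      fun h => hp (h.mono fun _ => not_not.1)
    refine ((hfreq.and_eventually self_mem_nhdsWithin).and_eventually
      (mem_nhdsWithin_of_mem_nhds (hU.mem_nhds hpU))).mono fun q ⟨⟨hqp, hqZ⟩, hqU⟩ => ?_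
    have hpq : p ∉ connectedComponentIn (Z ∩ B) q := mt mem_connectedComponentIn_symm hqp
    obtain ⟨y, hy, hyq⟩ := exists_mem_connectedComponentIn_inter_sdiff hZ hB hU hUB (hUB hqU)
      (mem_connectedComponentIn_symm hqZ) hpq
    exact ⟨y, hy, hpq, hyq⟩
  replace hfar := hfar.filter_mono (nhdsWithin_mono p (connectedComponentIn_subset Z p))
  set A := {q | ∃ y ∈ Z \ U,
    p ∉ connectedComponentIn (Z ∩ B) q ∧ y ∈ connectedComponentIn (Z ∩ B) q}
  choose! y hyZU hpq hyq using fun q (hq : q ∈ A) => hq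
  have : NeBot (𝓝[Z] p ⊓ 𝓟 A) := frequently_mem_iff_neBot.1 hfar
  have hA : ∀ᶠ q in 𝓝[Z] p ⊓ 𝓟 A, q ∈ A := mem_inf_of_right (mem_principal_self A)
  obtain ⟨y₀, hy₀, hcluster⟩ := (hZ.diff hU).exists_mapClusterPt_of_frequently
    (hA.mono hyZU).frequently
  refine ⟨y₀, hy₀, fun N hN M hM => ?_⟩
  obtain ⟨M', hM', hMM'⟩ := mem_nhdsWithin_iff_exists_mem_nhds_inter.1 hM
  refine exists_isCompact_partition_of_frequently_notMem_connectedComponentIn (p := p)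
    (hZ.inter_right hB) ?_
  have hfreq := ((mapClusterPt_iff_frequently.1 hcluster M' hM').and_eventually hA).and_eventually
    (mem_inf_of_left hN)
  refine (hfreq.filter_mono (inf_le_left.trans nhdsWithin_le_nhds)).mono
    fun q ⟨⟨hqM, hqA⟩, hqN⟩ => ?_
  exact ⟨hqN, hpq q hqA, y q, hMM' ⟨hqM, (hyZU q hqA).1⟩, hyq q hqA⟩

lemma connectedComponentIn_inter_mem_nhdsWithin {S U : Set α} [LocallyConnectedSpace S] {p : α}
    (hp : p ∈ S) (hU : U ∈ 𝓝 p) : connectedComponentIn (S ∩ U) p ∈ 𝓝[S] p := by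
  have h := image_mem_map (m := ((↑) : S → α)) <| connectedComponentIn_mem_nhds <|
    continuous_subtype_val.continuousAt (x := (⟨p, hp⟩ : S)) hU
  rw [map_nhds_subtype_val] at h
  have hsub := (continuous_subtype_val (p := (· ∈ S))).continuousOn
    |>.image_connectedComponentIn_subset (a := ⟨p, hp⟩) (s := (↑) ⁻¹' U) (mem_of_mem_nhds hU :)
  rw [Subtype.image_preimage_coe] at hsub
  exact mem_of_superset h hsub

lemma connectedComponentIn_inter_inter_mem_nhdsWithin {X Y U : Set α} [LocallyConnectedSpace X]
    [LocallyConnectedSpace Y] {p : α} (hp : p ∈ X ∩ Y) (hU : U ∈ 𝓝 p) :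
    connectedComponentIn (X ∩ U) p ∩ connectedComponentIn (Y ∩ U) p ∈ 𝓝[X ∩ Y] p :=
  inter_mem
    (nhdsWithin_mono p inter_subset_left (connectedComponentIn_inter_mem_nhdsWithin hp.1 hU))
    (nhdsWithin_mono p inter_subset_right (connectedComponentIn_inter_mem_nhdsWithin hp.2 hU))

lemma locallyConnectedSpace_coe_of_exists_isPreconnected {S : Set α}
    (h : ∀ p ∈ S, ∀ U ∈ 𝓝 p, ∃ V ⊆ S ∩ U, V ∈ 𝓝[S] p ∧ IsPreconnected V) :
    LocallyConnectedSpace S := by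
  refine locallyConnectedSpace_iff_connected_subsets.2 fun p U hU => ?_
  rw [nhds_subtype_eq_comap, mem_comap] at hU
  obtain ⟨U', hU', hsub⟩ := hU
  obtain ⟨V, hVU, hV, hVc⟩ := h p p.2 U' hU'
  have himage : ((↑) : S → α) '' ((↑) ⁻¹' V) = V :=
    Subtype.image_preimage_coe S V |>.trans (inter_eq_right.2 (hVU.trans inter_subset_left))
  refine ⟨(↑) ⁻¹' V, ?_, ?_, (preimage_mono (hVU.trans inter_subset_right)).trans hsub⟩
  · exact preimage_coe_mem_nhds_subtype.2 hV
  · rwa [← IsInducing.subtypeVal.isPreconnected_image, himage]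

end Components

section Logarithms

variable {α : Type*} [TopologicalSpace α]

/-- `g` is a continuous branch of `log f` on `s`. -/
structure IsLogOn (g f : α → ℂ) (s : Set α) : Prop where
  continuousOn : ContinuousOn g s
  exp_eq : ∀ z ∈ s, Complex.exp (g z) = f z

namespace IsLogOn

variable {g g₁ g₂ f f₁ f₂ : α → ℂ} {s t A B P Q : Set α}

lemma mono (h : IsLogOn g f t) (hst : s ⊆ t) : IsLogOn g f s :=
  ⟨h.continuousOn.mono hst, fun z hz => h.exp_eq z (hst hz)⟩

lemma congr (h : IsLogOn g₁ f₁ s) (hg : EqOn g₂ g₁ s) (hf : EqOn f₂ f₁ s) : IsLogOn g₂ f₂ s :=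
  ⟨h.continuousOn.congr hg, fun z hz => by rw [hg hz, hf hz, h.exp_eq z hz]⟩

lemma ne_zero (h : IsLogOn g f s) {z : α} (hz : z ∈ s) : f z ≠ 0 :=
  h.exp_eq z hz ▸ Complex.exp_ne_zero _

lemma add (h₁ : IsLogOn g₁ f₁ s) (h₂ : IsLogOn g₂ f₂ s) :
    IsLogOn (fun z => g₁ z + g₂ z) (fun z => f₁ z * f₂ z) s :=
  ⟨h₁.continuousOn.add h₂.continuousOn, fun z hz => by
    rw [Complex.exp_add, h₁.exp_eq z hz, h₂.exp_eq z hz]⟩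

lemma sub (h₁ : IsLogOn g₁ f₁ s) (h₂ : IsLogOn g₂ f₂ s) :
    IsLogOn (fun z => g₁ z - g₂ z) (fun z => f₁ z / f₂ z) s :=
  ⟨h₁.continuousOn.sub h₂.continuousOn, fun z hz => by
    rw [Complex.exp_sub, h₁.exp_eq z hz, h₂.exp_eq z hz]⟩

lemma add_log_div (h : IsLogOn g f₁ s) (hf₂ : ContinuousOn f₂ s)
    (hlt : ∀ z ∈ s, ‖f₂ z - f₁ z‖ < ‖f₁ z‖) :
    IsLogOn (fun z => g z + Complex.log (f₂ z / f₁ z)) f₂ s := by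
  have hf₁ : ContinuousOn f₁ s := h.continuousOn.cexp.congr fun z hz => (h.exp_eq z hz).symm
  have hslit : ∀ z ∈ s, f₂ z / f₁ z ∈ Complex.slitPlane := fun z hz => by
    have h0 := h.ne_zero hz
    have hsplit : f₂ z / f₁ z = 1 + (f₂ z - f₁ z) / f₁ z := by field_simp; ring
    rw [hsplit]
    refine Complex.mem_slitPlane_of_norm_lt_one ?_
    rw [norm_div, div_lt_one (norm_pos_iff.2 h0)]
    exact hlt z hz
  refine ⟨h.continuousOn.add ((hf₂.div hf₁ fun z hz => h.ne_zero hz).clog hslit), fun z hz => ?_⟩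
  rw [Complex.exp_add, h.exp_eq z hz, Complex.exp_log (Complex.slitPlane_ne_zero (hslit z hz)),
    mul_div_cancel₀ _ (h.ne_zero hz)]

lemma sub_eq_sub (h₁ : IsLogOn g₁ f A) (h₂ : IsLogOn g₂ f B) {x y : α}
    (hy : y ∈ connectedComponentIn (A ∩ B) x) : g₁ y - g₁ x = g₂ y - g₂ x := by
  have hsub := connectedComponentIn_subset (A ∩ B) x
  have hcomp := (h₁.mono (hsub.trans inter_subset_left)).sub
    (h₂.mono (hsub.trans inter_subset_right))
  have hone : ∀ z ∈ connectedComponentIn (A ∩ B) x, Complex.exp (g₁ z - g₂ z) = 1 := fun z hz => by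
    rw [hcomp.exp_eq z hz, div_self (h₁.ne_zero (hsub hz).1)]
  have hconst : g₁ y - g₂ y = g₁ x - g₂ x :=
    Complex.isCoveringMap_exp.constOn_of_comp isPreconnected_connectedComponentIn hcomp.continuousOn
      (fun z hz w hw => Subtype.ext ((hone z hz).trans (hone w hw).symm)) hy
      (mem_connectedComponentIn (connectedComponentIn_nonempty_iff.1 ⟨y, hy⟩))
  linear_combination hconst

lemma of_diff (hP : IsClosed P) (hQ : IsClosed Q) (hPQ : Disjoint P Q)
    (h₁ : IsLogOn g f (s \ P)) (h₂ : IsLogOn g f (s \ Q)) : IsLogOn g f s := by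
  have extend : ∀ {T : Set α}, IsClosed T → IsLogOn g f (s \ T) → ∀ a ∈ s, a ∉ T →
      ContinuousWithinAt g s a ∧ Complex.exp (g a) = f a := fun {T} hT h a ha haT =>
    ⟨(h.continuousOn a ⟨ha, haT⟩).mono_of_mem_nhdsWithin <| inter_mem self_mem_nhdsWithin <|
      mem_nhdsWithin_of_mem_nhds <| hT.isOpen_compl.mem_nhds haT, h.exp_eq a ⟨ha, haT⟩⟩
  have hboth : ∀ a ∈ s, ContinuousWithinAt g s a ∧ Complex.exp (g a) = f a := fun a ha => by
    by_cases haP : a ∈ P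
    · exact extend hQ h₂ a ha (hPQ.notMem_of_mem_left haP)
    · exact extend hP h₁ a ha haP
  exact ⟨fun a ha => (hboth a ha).1, fun a ha => (hboth a ha).2⟩

lemma exists_of_eqOn_diff (hP : IsClosed P) (hQ : IsClosed Q) (hPQ : Disjoint P Q)
    (h₁ : IsLogOn g₁ f (s \ P)) (h₂ : IsLogOn g₂ f (s \ Q)) (heq : EqOn g₁ g₂ (s \ (P ∪ Q))) :
    ∃ g, IsLogOn g f s := by
  classical
  refine ⟨P.piecewise g₂ g₁, of_diff hP hQ hPQ (h₁.congr ?_ (eqOn_refl _ _))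
    (h₂.congr (fun a ha => ?_) (eqOn_refl _ _))⟩
  · exact (piecewise_eqOn_compl P g₂ g₁).mono fun a ha => ha.2
  · by_cases haP : a ∈ P
    · exact piecewise_eq_of_mem P g₂ g₁ haP
    · rw [piecewise_eq_of_notMem P g₂ g₁ haP]
      exact heq ⟨ha.1, not_or.2 ⟨haP, ha.2⟩⟩

end IsLogOn

lemma isLogOn_log_const {c : ℂ} (hc : c ≠ 0) (s : Set α) :
    IsLogOn (fun _ => Complex.log c) (fun _ => c) s :=
  ⟨continuousOn_const, fun _ _ => Complex.exp_log hc⟩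

end Logarithms

section Nonseparating

variable {K P Q : Set ℂ}

lemma IsLogOn.exists_sub_of_norm_sub_lt {g : ℂ → ℂ} {a b : ℂ} (h : IsLogOn g (· - a) K)
    (hlt : ∀ z ∈ K, ‖a - b‖ < ‖z - a‖) : ∃ g', IsLogOn g' (· - b) K :=
  ⟨_, h.add_log_div (by fun_prop) (by simpa using hlt)⟩

lemma eventually_forall_norm_sub_lt (hK : IsClosed K) {a : ℂ} (ha : a ∉ K) :
    ∀ᶠ b in 𝓝 a, ∀ z ∈ K, ‖a - b‖ < ‖z - a‖ ∧ ‖b - a‖ < ‖z - b‖ := by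
  obtain ⟨δ, hδ, hball⟩ := Metric.isOpen_iff.1 hK.isOpen_compl a ha
  have hfar : ∀ z ∈ K, δ ≤ dist z a := fun z hz => not_lt.1 fun h => hball h hz
  filter_upwards [ball_mem_nhds a (half_pos hδ)] with b hb z hz
  rw [mem_ball] at hb
  rw [← dist_eq_norm, ← dist_eq_norm, ← dist_eq_norm, ← dist_eq_norm, dist_comm a b]
  constructor <;> linarith [hfar z hz, dist_triangle z b a]

lemma exists_isLogOn_sub_of_isPreconnected (hK : IsClosed K) {C : Set ℂ} (hC : IsPreconnected C)
    (hCK : C ⊆ Kᶜ) {a b : ℂ} (ha : a ∈ C) (hb : b ∈ C) (hlog : ∃ g, IsLogOn g (· - a) K) :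
    ∃ g, IsLogOn g (· - b) K := by
  have hiff : (∃ g, IsLogOn g (· - a) K) ↔ ∃ g, IsLogOn g (· - b) K := by
    refine hC.induction₂ (fun a b => (∃ g, IsLogOn g (· - a) K) ↔ ∃ g, IsLogOn g (· - b) K)
      (fun c hc => ?_) (fun _ _ _ _ _ _ => Iff.trans) (fun _ _ _ _ => Iff.symm) ha hb
    filter_upwards [mem_nhdsWithin_of_mem_nhds (eventually_forall_norm_sub_lt hK (hCK hc))]
      with d hd
    exact ⟨fun ⟨g, hg⟩ => hg.exists_sub_of_norm_sub_lt fun z hz => (hd z hz).1,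
      fun ⟨g, hg⟩ => hg.exists_sub_of_norm_sub_lt fun z hz => (hd z hz).2⟩
  exact hiff.1 hlog

/-- A compact set `K` on which `z - a` has a continuous logarithm for every `a ∉ K`; by Eilenberg's
criterion these are the compact sets that do not separate the plane. The analytic form is the one
that passes directly to intersections and to the pieces of a disjoint union. -/
structure IsNonseparating (K : Set ℂ) : Prop where
  isCompact : IsCompact K
  exists_isLogOn : ∀ a ∉ K, ∃ g, IsLogOn g (· - a) K

lemma isNonseparating_closedBall (c : ℂ) {r : ℝ} (hr : 0 ≤ r) :
    IsNonseparating (closedBall c r) := by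
  refine ⟨isCompact_closedBall c r, fun a ha => ?_⟩
  have hca : r < ‖c - a‖ := by simpa [dist_eq_norm, norm_sub_rev] using ha
  refine ⟨_, (isLogOn_log_const (norm_pos_iff.1 (hr.trans_lt hca)) _).add_log_div (by fun_prop)
    fun z hz => ?_⟩
  rw [sub_sub_sub_cancel_right]
  exact (mem_closedBall_iff_norm.1 hz).trans_lt hca

lemma isNonseparating_of_isPreconnected_compl (hK : IsCompact K) (hc : IsPreconnected Kᶜ) :
    IsNonseparating K := by
  refine ⟨hK, fun a ha => ?_⟩
  obtain ⟨R, hR₀, hR⟩ := hK.isBounded.subset_closedBall_lt 0 0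
  obtain ⟨b, hb⟩ := (ne_univ_iff_exists_notMem _).1 (isCompact_closedBall (0 : ℂ) R).ne_univ
  obtain ⟨g, hg⟩ := (isNonseparating_closedBall 0 hR₀.le).exists_isLogOn b hb
  exact exists_isLogOn_sub_of_isPreconnected hK.isClosed hc Subset.rfl (fun h => hb (hR h)) ha
    ⟨g, hg.mono hR⟩

namespace IsNonseparating

lemma inter (hP : IsNonseparating P) (hQ : IsNonseparating Q) : IsNonseparating (P ∩ Q) := by
  refine ⟨hP.isCompact.inter hQ.isCompact, fun a ha => ?_⟩
  by_cases haP : a ∈ P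
  · obtain ⟨g, hg⟩ := hQ.exists_isLogOn a fun haQ => ha ⟨haP, haQ⟩
    exact ⟨g, hg.mono inter_subset_right⟩
  · obtain ⟨g, hg⟩ := hP.exists_isLogOn a haP
    exact ⟨g, hg.mono inter_subset_left⟩

lemma of_union_left (hPQ : IsNonseparating (P ∪ Q)) (hP : IsCompact P) (hQ : IsCompact Q)
    (hdisj : Disjoint P Q) : IsNonseparating P := by
  refine ⟨hP, fun a ha => ?_⟩
  by_contra hbad
  set C := connectedComponentIn Pᶜ a
  have haC : a ∈ C := mem_connectedComponentIn ha
  have hCQ : C ⊆ Q := fun b hb => by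
    by_contra hbQ
    obtain ⟨g, hg⟩ := hPQ.exists_isLogOn b (not_or.2 ⟨connectedComponentIn_subset _ _ hb, hbQ⟩)
    exact hbad (exists_isLogOn_sub_of_isPreconnected hP.isClosed isPreconnected_connectedComponentIn
      (connectedComponentIn_subset _ _) hb haC ⟨g, hg.mono subset_union_left⟩)
  have hopen : IsOpen C := hP.isClosed.isOpen_compl.connectedComponentIn
  have hclosed : IsClosed C := isClosed_of_closure_subset <|
    isPreconnected_connectedComponentIn.closure.subset_connectedComponentIn (subset_closure haC) <|
      (closure_minimal hCQ hQ.isClosed).trans hdisj.subset_compl_left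
  have huniv : C = univ := IsClopen.eq_univ ⟨hclosed, hopen⟩ ⟨a, haC⟩
  exact hQ.ne_univ (univ_subset_iff.1 (huniv ▸ hCQ))

lemma exists_isLogOn_div (hK : IsNonseparating K) {q y : ℂ} (hy : y ∈ connectedComponentIn K q) :
    ∃ H, IsLogOn H (fun a => (y - a) / (q - a)) Kᶜ ∧ ∀ a ∉ K, ∀ W g, IsLogOn g (· - a) W →
      y ∈ connectedComponentIn (K ∩ W) q → H a = g y - g q := by
  choose! g hg using hK.exists_isLogOn
  have hyK : y ∈ K := connectedComponentIn_subset K q hy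
  have hqK : q ∈ K := connectedComponentIn_nonempty_iff.1 ⟨y, hy⟩
  have hincr : ∀ a ∉ K, ∀ W g', IsLogOn g' (· - a) W → y ∈ connectedComponentIn (K ∩ W) q →
      g a y - g a q = g' y - g' q := fun a ha W g' hg' hyW => (hg a ha).sub_eq_sub hg' hyW
  refine ⟨fun a => g a y - g a q, ⟨fun a ha => ContinuousAt.continuousWithinAt ?_, fun a ha => ?_⟩,
    hincr⟩
  · have hlog : ∀ z ∈ K, ContinuousAt (fun b => g a z + Complex.log ((z - b) / (z - a))) a :=
      fun z hz => by
        refine continuousAt_const.add (ContinuousAt.clog (by fun_prop) ?_)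
        rw [div_self ((hg a ha).ne_zero hz)]
        exact Complex.one_mem_slitPlane
    refine ((hlog y hyK).sub (hlog q hqK)).congr ?_
    filter_upwards [eventually_forall_norm_sub_lt hK.isCompact.isClosed ha,
      hK.isCompact.isClosed.isOpen_compl.mem_nhds ha] with b hb hbK
    refine (hincr b hbK K _ ((hg a ha).add_log_div (by fun_prop) fun z hz => ?_) ?_).symm
    · simpa using (hb z hz).1
    · rwa [inter_self]
  · exact ((hg a ha).exp_eq y hyK ▸ (hg a ha).exp_eq q hqK ▸ Complex.exp_sub _ _)

/-- On `S \ P` the increment of `log (z - a)` is taken along `P`, on `S \ Q` it is taken along the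
detour `q₁ → q₂ → y₂ → y₁` through `D`, `Q` and `E`; where both are defined, a common branch
shows that they agree. -/
lemma exists_isLogOn_div_of_linked (hP : IsNonseparating P) (hQ : IsNonseparating Q)
    (hPQ : Disjoint P Q) {D E S : Set ℂ} (hD : IsNonseparating D) (hE : IsNonseparating E)
    (hSD : Disjoint S D) (hSE : Disjoint S E) {q₁ q₂ y₁ y₂ : ℂ}
    (hy₁ : y₁ ∈ connectedComponentIn P q₁) (hy₂ : y₂ ∈ connectedComponentIn Q q₂)
    (hq : q₂ ∈ connectedComponentIn D q₁) (hy : y₁ ∈ connectedComponentIn E y₂)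
    (hW : ∀ a ∈ S \ (P ∪ Q), ∃ W g, IsLogOn g (· - a) W ∧ P ∪ Q ⊆ W ∧
      q₂ ∈ connectedComponentIn (D ∩ W) q₁ ∧ y₁ ∈ connectedComponentIn (E ∩ W) y₂) :
    ∃ H, IsLogOn H (fun a => (y₁ - a) / (q₁ - a)) S := by
  obtain ⟨HP, hHP, hHP'⟩ := hP.exists_isLogOn_div hy₁
  obtain ⟨HQ, hHQ, hHQ'⟩ := hQ.exists_isLogOn_div hy₂
  obtain ⟨HD, hHD, hHD'⟩ := hD.exists_isLogOn_div hq
  obtain ⟨HE, hHE, hHE'⟩ := hE.exists_isLogOn_div hy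
  have hdetour := ((hHD.mono (sdiff_subset.trans hSD.subset_compl_right)).add
    (hHQ.mono (sdiff_subset_compl S Q))).add (hHE.mono (sdiff_subset.trans hSE.subset_compl_right))
  refine IsLogOn.exists_of_eqOn_diff hP.isCompact.isClosed hQ.isCompact.isClosed hPQ
    (hHP.mono (sdiff_subset_compl S P)) (hdetour.congr (eqOn_refl _ _) fun a ha => ?_)
    fun a ha => ?_
  · have hne : ∀ z ∈ Q, z - a ≠ 0 := fun z hz => sub_ne_zero.2 (ne_of_mem_of_not_mem hz ha.2)
    have hq₂a := hne q₂ (connectedComponentIn_nonempty_iff.1 ⟨y₂, hy₂⟩)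
    have hy₂a := hne y₂ (connectedComponentIn_subset Q q₂ hy₂)
    field_simp
  · obtain ⟨W, g, hg, hPQW, hqW, hyW⟩ := hW a ha
    have haPQ := not_or.1 ha.2
    rw [← inter_eq_left.2 (subset_union_left.trans hPQW)] at hy₁
    rw [← inter_eq_left.2 (subset_union_right.trans hPQW)] at hy₂
    rw [hHP' a haPQ.1 W g hg hy₁, hHQ' a haPQ.2 W g hg hy₂,
      hHD' a (hSD.notMem_of_mem_left ha.1) W g hg hqW,
      hHE' a (hSE.notMem_of_mem_left ha.1) W g hg hyW]
    ring

lemma exists_isLogOn_div_of_union_eq {X Y B D E S : Set ℂ} (hX : IsNonseparating X)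
    (hY : IsNonseparating Y) (hB : IsNonseparating B) (hD : IsNonseparating D)
    (hE : IsNonseparating E) (hP : IsCompact P) (hQ : IsCompact Q) (hPQ : Disjoint P Q)
    (hunion : P ∪ Q = X ∩ Y ∩ B) (hSB : S ⊆ B) (hSD : Disjoint S D) (hSE : Disjoint S E)
    {q₁ q₂ y₁ y₂ : ℂ} (hy₁ : y₁ ∈ connectedComponentIn P q₁) (hy₂ : y₂ ∈ connectedComponentIn Q q₂)
    (hqX : q₂ ∈ connectedComponentIn (X ∩ D) q₁) (hqY : q₂ ∈ connectedComponentIn (Y ∩ D) q₁)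
    (hyX : y₁ ∈ connectedComponentIn (X ∩ E) y₂) (hyY : y₁ ∈ connectedComponentIn (Y ∩ E) y₂) :
    ∃ H, IsLogOn H (fun a => (y₁ - a) / (q₁ - a)) S := by
  have hZ : IsNonseparating (P ∪ Q) := hunion ▸ (hX.inter hY).inter hB
  have hsub : P ∪ Q ⊆ X ∩ Y := hunion ▸ inter_subset_left
  refine exists_isLogOn_div_of_linked (hZ.of_union_left hP hQ hPQ)
    ((union_comm P Q ▸ hZ).of_union_left hQ hP hPQ.symm) hPQ hD hE hSD hSE hy₁ hy₂
    (connectedComponentIn_mono _ inter_subset_right hqX)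
    (connectedComponentIn_mono _ inter_subset_right hyX) fun a ⟨haS, haPQ⟩ => ?_
  have haXY : ¬ (a ∈ X ∧ a ∈ Y) := fun h => haPQ (hunion ▸ ⟨h, hSB haS⟩)
  rw [inter_comm] at hqX hqY hyX hyY
  by_cases haX : a ∈ X
  · obtain ⟨g, hg⟩ := hY.exists_isLogOn a fun haY => haXY ⟨haX, haY⟩
    exact ⟨Y, g, hg, hsub.trans inter_subset_right, hqY, hyY⟩
  · obtain ⟨g, hg⟩ := hX.exists_isLogOn a haX
    exact ⟨X, g, hg, hsub.trans inter_subset_left, hqX, hyX⟩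

end IsNonseparating

lemma not_isLogOn_sub_center_sphere {p : ℂ} {r : ℝ} (hr : 0 < r) (g : ℂ → ℂ) :
    ¬ IsLogOn g (· - p) (sphere p r) := by
  intro hg
  have hmem : ∀ θ : ℝ, circleMap p r θ ∈ sphere p r := circleMap_mem_sphere p hr.le
  have hexp : ∀ θ : ℝ, Complex.exp (g (circleMap p r θ) - θ * Complex.I) = r := fun θ => by
    rw [Complex.exp_sub, hg.exp_eq _ (hmem θ), circleMap_sub_center, circleMap_zero,
      mul_div_cancel_right₀ _ (Complex.exp_ne_zero _)]
  have hcont : ContinuousOn (fun θ : ℝ => g (circleMap p r θ) - θ * Complex.I) univ :=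
    (hg.continuousOn.comp (by fun_prop) fun θ _ => hmem θ).sub (by fun_prop)
  have hconst := Complex.isCoveringMap_exp.constOn_of_comp isPreconnected_univ hcont
    (fun θ _ θ' _ => Subtype.ext ((hexp θ).trans (hexp θ').symm))
    (mem_univ 0) (mem_univ (2 * Real.pi))
  have hperiod : circleMap p r (2 * Real.pi) = circleMap p r 0 := by simp [circleMap]
  refine Complex.two_pi_I_ne_zero ?_
  rw [hperiod] at hconst
  push_cast at hconst
  linear_combination hconst

lemma not_isLogOn_sub_sphere {p q : ℂ} {r : ℝ} (hq : q ∈ ball p r) (g : ℂ → ℂ) :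
    ¬ IsLogOn g (· - q) (sphere p r) := fun hg => by
  have hr : 0 < r := dist_nonneg.trans_lt hq
  obtain ⟨g', hg'⟩ := exists_isLogOn_sub_of_isPreconnected isClosed_sphere
    (convex_ball p r).isPreconnected sphere_disjoint_ball.subset_compl_left hq (mem_ball_self hr)
    ⟨g, hg⟩
  exact not_isLogOn_sub_center_sphere hr g' hg'

lemma not_isLogOn_div_sphere {p q y : ℂ} {r : ℝ} (hq : q ∈ ball p r) (hy : y ∉ closedBall p r)
    (H : ℂ → ℂ) : ¬ IsLogOn H (fun a => (y - a) / (q - a)) (sphere p r) := fun hH => by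
  obtain ⟨g, hg⟩ :=
    (isNonseparating_closedBall p (dist_nonneg.trans hq.le)).exists_isLogOn y hy
  refine not_isLogOn_sub_sphere hq _ <|
    ((hg.mono sphere_subset_closedBall).sub hH).congr (eqOn_refl _ _) fun a ha => ?_
  have hya : y - a ≠ 0 := (div_ne_zero_iff.1 (hH.ne_zero ha)).1
  field_simp
  ring

lemma connectedComponentIn_inter_closedBall_mem_nhdsWithin {X Y : Set ℂ} (hX : IsNonseparating X)
    (hY : IsNonseparating Y) [LocallyConnectedSpace X] [LocallyConnectedSpace Y] {p : ℂ} {R : ℝ}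
    (hp : p ∈ X ∩ Y) (hR : 0 < R) :
    connectedComponentIn (X ∩ Y ∩ closedBall p R) p ∈ 𝓝[connectedComponentIn (X ∩ Y) p] p := by
  by_contra hbad
  obtain ⟨y₀, ⟨hy₀, hy₀R⟩, hpieces⟩ :=
    exists_isCompact_partition_of_connectedComponentIn_notMem_nhdsWithin
      (hX.inter hY).isCompact isClosed_closedBall isOpen_ball ball_subset_closedBall
      (mem_ball_self hR) hbad
  rw [mem_ball, not_lt] at hy₀R
  have hR₃ : 0 < R / 3 := by positivity
  obtain ⟨P, Q, hP, hQ, hPQ, hunion, ⟨q₁, ⟨hq₁X, hq₁Y⟩, y₁, ⟨hy₁X, hy₁Y⟩, hqy₁⟩,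
      q₂, ⟨hq₂X, hq₂Y⟩, y₂, ⟨hy₂X, hy₂Y⟩, hqy₂⟩ := hpieces
    _ (connectedComponentIn_inter_inter_mem_nhdsWithin hp (closedBall_mem_nhds p hR₃))
    _ (connectedComponentIn_inter_inter_mem_nhdsWithin hy₀ (closedBall_mem_nhds y₀ hR₃))
  have hD : closedBall p (R / 3) ⊆ ball p (R / 2) := closedBall_subset_ball (by linarith)
  have hE : Disjoint (closedBall p (R / 2)) (closedBall y₀ (R / 3)) :=
    closedBall_disjoint_closedBall (by rw [dist_comm]; linarith)
  have hq₁D : q₁ ∈ closedBall p (R / 3) := (connectedComponentIn_subset _ _ hq₁X).2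
  have hy₁E : y₁ ∈ closedBall y₀ (R / 3) := (connectedComponentIn_subset _ _ hy₁X).2
  rw [connectedComponentIn_eq hq₁X] at hq₂X
  rw [connectedComponentIn_eq hq₁Y] at hq₂Y
  rw [connectedComponentIn_eq hy₂X] at hy₁X
  rw [connectedComponentIn_eq hy₂Y] at hy₁Y
  obtain ⟨H, hH⟩ := hX.exists_isLogOn_div_of_union_eq hY (isNonseparating_closedBall p hR.le)
    (isNonseparating_closedBall p hR₃.le) (isNonseparating_closedBall y₀ hR₃.le) hP hQ hPQ hunion
    (sphere_subset_closedBall.trans (closedBall_subset_closedBall (half_le_self hR.le)))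
    (sphere_disjoint_ball.mono_right hD) (hE.mono_left sphere_subset_closedBall)
    hqy₁ hqy₂ hq₂X hq₂Y hy₁X hy₁Y
  exact not_isLogOn_div_sphere (hD hq₁D) (hE.notMem_of_mem_right hy₁E) H hH

lemma locallyConnectedSpace_connectedComponentIn_inter {X Y : Set ℂ} (hX : IsNonseparating X)
    (hY : IsNonseparating Y) [LocallyConnectedSpace X] [LocallyConnectedSpace Y] (x : ℂ) :
    LocallyConnectedSpace (connectedComponentIn (X ∩ Y) x) := by
  refine locallyConnectedSpace_coe_of_exists_isPreconnected fun p hp U hU => ?_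
  obtain ⟨R, hR, hRU⟩ := nhds_basis_closedBall.mem_iff.1 hU
  rw [connectedComponentIn_eq hp]
  refine ⟨connectedComponentIn (X ∩ Y ∩ closedBall p R) p, subset_inter ?_ ?_,
    connectedComponentIn_inter_closedBall_mem_nhdsWithin hX hY
      (connectedComponentIn_subset _ _ hp) hR, isPreconnected_connectedComponentIn⟩
  · exact connectedComponentIn_mono p inter_subset_left
  · exact (connectedComponentIn_subset _ _).trans (inter_subset_right.trans hRU)

end Nonseparating

theorem component_of_inter_locallyConnected_general {E : Type*} [NormedAddCommGroup E]
    [NormedSpace ℝ E] (hE : Module.finrank ℝ E = 2) {X Y : Set E} (hXcpt : IsCompact X)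
    (hYcpt : IsCompact Y) [LocallyConnectedSpace X] [LocallyConnectedSpace Y]
    (hXc : IsPreconnected Xᶜ) (hYc : IsPreconnected Yᶜ) (x : E) :
    LocallyConnectedSpace (connectedComponentIn (X ∩ Y) x) := by
  have : FiniteDimensional ℝ E := FiniteDimensional.of_finrank_pos (by omega)
  let e : E ≃ₜ ℂ := (ContinuousLinearEquiv.ofFinrankEq
    (hE.trans Complex.finrank_real_complex.symm)).toHomeomorph
  have transfer : ∀ S : Set E, IsCompact S → IsPreconnected Sᶜ → IsNonseparating (e '' S) :=
    fun S hS hSc => isNonseparating_of_isPreconnected_compl (hS.image e.continuous) <| by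
      rw [← image_compl_eq e.bijective]
      exact hSc.image _ e.continuous.continuousOn
  have : LocallyConnectedSpace (e '' X) := (e.image X).symm.locallyConnectedSpace
  have : LocallyConnectedSpace (e '' Y) := (e.image Y).symm.locallyConnectedSpace
  by_cases hx : x ∈ X ∩ Y
  · have hcomplex := locallyConnectedSpace_connectedComponentIn_inter (transfer X hXcpt hXc)
      (transfer Y hYcpt hYc) (e x)
    rw [← image_inter e.injective, ← e.image_connectedComponentIn hx] at hcomplex
    exact (e.image _).locallyConnectedSpace
  · rw [connectedComponentIn_eq_empty hx]
    infer_instance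

/-- If `X` and `Y` are locally connected continua in the plane neither of which separates
the plane, then every connected component of `X ∩ Y` is locally connected. -/
theorem component_of_inter_locallyConnected
    (X Y : Set (EuclideanSpace ℝ (Fin 2)))
    (hXcpt : IsCompact X) (hYcpt : IsCompact Y)
    (hXconn : IsConnected X) (hYconn : IsConnected Y)
    (hXlc : LocallyConnectedSpace X) (hYlc : LocallyConnectedSpace Y)
    (hXc : IsConnected Xᶜ) (hYc : IsConnected Yᶜ) :
    ∀ x ∈ X ∩ Y, LocallyConnectedSpace ↥(connectedComponentIn (X ∩ Y) x) :=
  fun x _ => component_of_inter_locallyConnected_general finrank_euclideanSpace_fin hXcpt hYcpt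
    hXc.isPreconnected hYc.isPreconnected x
end
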